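/- arXiv:2108.01024 — 2 statements merged into one kernel-verified Lean document; each statement's English description precedes it below -/
import Mathlib

section
/- For every prime power q, the number of ordered 7-arcs in P^3(F_q) is C_{7,4}(q) = (q^2 + q + 1)(q^2 + 1)(q + 1)^2 (q − 1)^3 · q^6 · (q^6 − 28q^5 + 323q^4 − 1952q^3 + 6462q^2 − 11004q + 7470 − 30·a(q)), where a(q) = 1 if q is even and a(q) = 0 if q is odd. -/
open scoped LinearAlgebra.Projectivization

/-- Four points of `ℙ³(F_q)` are coplanar if vector representatives of them span a subspace
of `F_q^4` of dimension at most 3. -/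
def Coplanar4 (F : Type) [Field F] (x y z w : ℙ F (Fin 4 → F)) : Prop :=
  Module.finrank F
    ↥(x.submodule ⊔ y.submodule ⊔ z.submodule ⊔ w.submodule) ≤ 3

/-- An ordered `n`-arc in `ℙ³(F_q)`: an injective function from `{1,…,n}` to `ℙ³(F_q)`
such that no 4 of its points are coplanar. -/
def IsArc4 (F : Type) [Field F] {n : ℕ} (σ : Fin n → ℙ F (Fin 4 → F)) : Prop :=
  Function.Injective σ ∧
    ∀ a b c d : Fin n, a ≠ b → a ≠ c → a ≠ d → b ≠ c → b ≠ d → c ≠ d →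
      ¬ Coplanar4 F (σ a) (σ b) (σ c) (σ d)

namespace Seven

/-- Arcs, formulated through linear independence of vectors. -/
def ArcLI {F : Type} [Field F] {ι : Type} {k : ℕ} (V : ι → Fin k → F) : Prop :=
  ∀ f : Fin k → ι, Function.Injective f → LinearIndependent F (V ∘ f)

/-- The kernel code attached to `M`. -/
def KK {F : Type} [Field F] (M : Fin 4 → Fin 3 → F) (y : Fin 4 ⊕ Fin 3 → F) : Prop :=
  ∀ j, y (Sum.inr j) = ∑ i, M i j * y (Sum.inl i)

/-- The kernel code is MDS. -/
def MDS {F : Type} [Field F] (M : Fin 4 → Fin 3 → F) : Prop :=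
  ∀ T : Finset (Fin 4 ⊕ Fin 3), T.card = 3 → ∀ y, (∀ s, s ∉ T → y s = 0) → KK M y → y = 0

section
variable {F : Type} [Field F]

lemma coplanar_iff (x y z w : ℙ F (Fin 4 → F)) :
    ¬ Coplanar4 F x y z w ↔ LinearIndependent F ![x.rep, y.rep, z.rep, w.rep] := by
  rw [linearIndependent_iff_card_le_finrank_span, Coplanar4]
  have : x.submodule ⊔ y.submodule ⊔ z.submodule ⊔ w.submodule
      = Submodule.span F (Set.range ![x.rep, y.rep, z.rep, w.rep]) := by
    simp only [Projectivization.submodule_eq, ← Submodule.span_union]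
    congr 1
    ext u
    simp
  rw [this, Set.finrank]
  simp
  omega

lemma isArc_iff (σ : Fin 7 → ℙ F (Fin 4 → F)) :
    IsArc4 F σ ↔ ArcLI (fun i => (σ i).rep) := by
  constructor
  · intro h f hf
    have := (coplanar_iff _ _ _ _).1 (h.2 (f 0) (f 1) (f 2) (f 3)
      (hf.ne (by decide)) (hf.ne (by decide)) (hf.ne (by decide)) (hf.ne (by decide))
      (hf.ne (by decide)) (hf.ne (by decide)))
    convert this using 1
    funext i
    fin_cases i <;> rfl
  · intro h
    have key : ∀ a b c d : Fin 7, a ≠ b → a ≠ c → a ≠ d → b ≠ c → b ≠ d → c ≠ d →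
      LinearIndependent F ![(σ a).rep, (σ b).rep, (σ c).rep, (σ d).rep] := by
      intro a b c d h1 h2 h3 h4 h5 h6
      have := h ![a, b, c, d] (by
        intro i j hij
        fin_cases i <;> fin_cases j <;> simp_all)
      convert this using 1
      funext i
      fin_cases i <;> rfl
    refine ⟨?_, fun a b c d h1 h2 h3 h4 h5 h6 => (coplanar_iff _ _ _ _).2 (key a b c d h1 h2 h3 h4 h5 h6)⟩
    intro a b hab
    by_contra hne
    have : ∃ c d : Fin 7, a ≠ c ∧ a ≠ d ∧ b ≠ c ∧ b ≠ d ∧ c ≠ d := by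
      clear hab h key
      revert a b; decide
    obtain ⟨c, d, h2, h3, h4, h5, h6⟩ := this
    have := (key a b c d hne h2 h3 h4 h5 h6).injective.ne (show (0 : Fin 4) ≠ 1 by decide)
    simp [hab] at this

lemma arcLI_smul {ι : Type} {k : ℕ} (V : ι → Fin k → F) (c : ι → Fˣ) :
    ArcLI (fun i => c i • V i) ↔ ArcLI V := by
  constructor
  · intro h f hf
    have := (h f hf).units_smul (fun i => (c (f i))⁻¹)
    convert this using 1
    funext i
    simp
  · intro h f hf
    have := (h f hf).units_smul (fun i => (c (f i)))
    exact this

lemma card_arcs [Fintype F] :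
    Nat.card {σ : Fin 7 → ℙ F (Fin 4 → F) // IsArc4 F σ} * (Fintype.card F - 1) ^ 7 =
      Nat.card {V : Fin 7 → Fin 4 → F // ArcLI V} := by
  classical
  have h1 : (Fintype.card F - 1) ^ 7 = Nat.card (Fin 7 → Fˣ) := by
    rw [Nat.card_fun, Nat.card_eq_fintype_card, Nat.card_eq_fintype_card, Fintype.card_units]
    simp
  rw [h1, ← Nat.card_prod]
  refine Nat.card_eq_of_bijective
    (fun p => ⟨fun i => p.2 i • (p.1.1 i).rep, (arcLI_smul _ _).2 ((isArc_iff _).1 p.1.2)⟩) ⟨?_, ?_⟩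
  · rintro ⟨⟨σ, hσ⟩, c⟩ ⟨⟨τ, hτ⟩, d⟩ h
    simp only [Subtype.mk.injEq, funext_iff] at h
    have e1 : σ = τ := by
      funext i
      rw [← (σ i).mk_rep, ← (τ i).mk_rep, Projectivization.mk_eq_mk_iff]
      refine ⟨(c i)⁻¹ * d i, ?_⟩
      have : c i • (σ i).rep = d i • (τ i).rep := funext (h i)
      rw [mul_smul, ← this, inv_smul_smul]
    subst e1
    have e2 : c = d := by
      funext i
      have : c i • (σ i).rep = d i • (σ i).rep := funext (h i)
      ext
      exact smul_left_injective F (σ i).rep_nonzero this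
    subst e2
    rfl
  · rintro ⟨V, hV⟩
    have hne : ∀ i, V i ≠ 0 := by
      intro i
      have : ∃ f : Fin 4 → Fin 7, Function.Injective f ∧ f 0 = i := by
        clear hV V h1
        refine ⟨fun j => i + Fin.castLE (by omega) j, ?_, by simp⟩
        intro a b h
        simpa using h
      obtain ⟨f, hf, rfl⟩ := this
      exact (hV f hf).ne_zero 0
    choose a ha using fun i => Projectivization.exists_smul_eq_mk_rep F (V i) (hne i)
    have hV' : (fun i => (a i)⁻¹ • (Projectivization.mk F (V i) (hne i)).rep) = V := by
      funext i
      rw [← ha, inv_smul_smul]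
    refine ⟨⟨⟨fun i => Projectivization.mk F (V i) (hne i), ?_⟩, fun i => (a i)⁻¹⟩, ?_⟩
    · rw [isArc_iff, ← arcLI_smul _ (fun i => (a i)⁻¹), hV']
      exact hV
    · exact Subtype.ext hV'

/-- the four-dimensional configuration. -/
def VV (G : Fin 4 → Fin 4 → F) (M : Fin 4 → Fin 3 → F) : Fin 4 ⊕ Fin 3 → Fin 4 → F :=
  Sum.elim G (fun j => ∑ i, M i j • G i)

/-- the three-dimensional configuration. -/
def WW (G : Fin 3 → Fin 3 → F) (M : Fin 4 → Fin 3 → F) : Fin 4 ⊕ Fin 3 → Fin 3 → F :=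
  Sum.elim (fun i => - ∑ j, M i j • G j) G

lemma li_iff_dot {k : ℕ} (A : Fin k → Fin k → F) :
    LinearIndependent F A ↔ ∀ x : Fin k → F, (∀ i, ∑ j, A i j * x j = 0) → x = 0 := by
  have h1 : LinearIndependent F A ↔ IsUnit (Matrix.of A) :=
    Matrix.linearIndependent_rows_iff_isUnit (A := Matrix.of A)
  rw [h1, ← Matrix.mulVec_injective_iff_isUnit]
  constructor
  · intro h x hx
    apply h
    rw [Matrix.mulVec_zero]
    funext i
    simpa [Matrix.mulVec, dotProduct] using hx i
  · intro h
    have := (injective_iff_map_eq_zero (Matrix.mulVecLin (Matrix.of A))).2 (by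
      intro x hx
      apply h
      intro i
      have := congrFun hx i
      simpa [Matrix.mulVec, dotProduct] using this)
    exact this

lemma mds_iff_V (G : Fin 4 → Fin 4 → F) (hG : LinearIndependent F G) (M : Fin 4 → Fin 3 → F) :
    ArcLI (VV G M) ↔ MDS M := by
  classical
  have hK : ∀ x : Fin 4 → F, KK M (fun s => ∑ j, VV G M s j * x j) := by
    intro x j
    simp only [VV, Sum.elim_inr, Sum.elim_inl, Finset.sum_apply, Pi.smul_apply, smul_eq_mul,
      Finset.sum_mul, Finset.mul_sum]
    rw [Finset.sum_comm]
    simp [mul_assoc]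
  have hsurj : ∀ y, KK M y → ∃ x : Fin 4 → F, y = (fun s => ∑ j, VV G M s j * x j) := by
    intro y hy
    have hu : IsUnit (Matrix.of G) := Matrix.linearIndependent_rows_iff_isUnit.1 hG
    obtain ⟨x, hx⟩ := (Matrix.mulVec_surjective_iff_isUnit.2 hu) (fun i => y (Sum.inl i))
    have h0 : ∀ i, y (Sum.inl i) = ∑ j, VV G M (Sum.inl i) j * x j := by
      intro i
      have := congrFun hx i
      simpa [Matrix.mulVec, dotProduct, VV] using this.symm
    refine ⟨x, ?_⟩
    funext s
    rcases s with i | j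
    · exact h0 i
    · refine (hy j).trans (Eq.trans ?_ (hK x j).symm)
      simp only [h0]
  have hG' := (li_iff_dot G).1 hG
  constructor
  · intro h T hT y hy hyK
    obtain ⟨x, rfl⟩ := hsurj y hyK
    have hc : (Tᶜ).card = 4 := by rw [Finset.card_compl, hT]; simp
    let e := (Tᶜ).equivFinOfCardEq hc
    have hf := h (fun i => (e.symm i : Fin 4 ⊕ Fin 3)) (by
      intro a b hab
      exact e.symm.injective (Subtype.ext hab))
    have hx := (li_iff_dot _).1 hf x (by
      intro i
      exact hy _ (Finset.mem_compl.1 (e.symm i).2))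
    subst hx
    funext s
    simp
  · intro h f hf
    rw [li_iff_dot]
    intro x hx
    have h0 := h ((Finset.univ.image f)ᶜ) (by
      rw [Finset.card_compl, Finset.card_image_of_injective _ hf]; simp) _ (by
        intro s hs
        simp at hs
        obtain ⟨i, rfl⟩ := hs
        exact hx i) (hK x)
    apply hG'
    intro i
    exact congrFun h0 (Sum.inl i)

lemma mds_iff_W (G : Fin 3 → Fin 3 → F) (hG : LinearIndependent F G) (M : Fin 4 → Fin 3 → F) :
    ArcLI (WW G M) ↔ MDS M := by
  classical
  have hK : ∀ y, KK M y ↔ ∑ s, y s • WW G M s = 0 := by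
    intro y
    have : ∑ s, y s • WW G M s
        = ∑ j, (y (Sum.inr j) - ∑ i, M i j * y (Sum.inl i)) • G j := by
      simp only [WW, Fintype.sum_sum_type, Sum.elim_inl, Sum.elim_inr, sub_smul,
        Finset.sum_sub_distrib, smul_neg, Finset.smul_sum, Finset.sum_smul, Finset.sum_neg_distrib]
      rw [Finset.sum_comm (s := (Finset.univ : Finset (Fin 4)))]
      simp only [smul_smul, mul_comm]
      abel
    rw [this]
    constructor
    · intro h
      simp [h _]
    · intro h j
      exact sub_eq_zero.1 (Fintype.linearIndependent_iff.1 hG _ h j)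
  constructor
  · intro h T hT y hy hyK
    let e := T.equivFinOfCardEq hT
    have hinj : Function.Injective (fun i => (e.symm i : Fin 4 ⊕ Fin 3)) := by
      intro a b hab
      exact e.symm.injective (Subtype.ext hab)
    have hf := h _ hinj
    rw [hK] at hyK
    have h0 := Fintype.linearIndependent_iff.1 hf (fun i => y (e.symm i)) (by
      rw [← hyK, ← Finset.sum_subset (Finset.subset_univ T) (by
        intro s _ hs; rw [hy s hs, zero_smul]), ← Finset.sum_coe_sort T]
      exact Equiv.sum_comp e.symm (fun s : T => y s • WW G M s))
    funext s
    by_cases hs : s ∈ T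
    · simpa using h0 (e ⟨s, hs⟩)
    · exact hy s hs
  · intro h f hf
    rw [Fintype.linearIndependent_iff]
    intro c hc i
    have hy : ∀ i, Function.extend f c 0 (f i) = c i := fun i => hf.extend_apply _ _ _
    have h0 := h (Finset.univ.image f) (by
      rw [Finset.card_image_of_injective _ hf]; simp) (Function.extend f c 0) (by
        intro s hs
        rw [Function.extend_apply']
        · rfl
        · simpa using hs) (by
        rw [hK, ← hc, ← Finset.sum_subset (Finset.subset_univ (Finset.univ.image f)) (by
          intro s _ hs
          rw [Function.extend_apply' _ _ _ (by simpa using hs)]; simp),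
          Finset.sum_image (fun a _ b _ hab => hf hab)]
        simp [hy])
    rw [← hy i, h0]; rfl

lemma card_V :
    Nat.card {V : Fin 4 ⊕ Fin 3 → Fin 4 → F // ArcLI V} =
      Nat.card {G : Fin 4 → Fin 4 → F // LinearIndependent F G} *
        Nat.card {M : Fin 4 → Fin 3 → F // MDS M} := by
  rw [← Nat.card_prod]
  symm
  refine Nat.card_eq_of_bijective (fun p => ⟨VV p.1.1 p.2.1, (mds_iff_V _ p.1.2 _).2 p.2.2⟩) ⟨?_, ?_⟩
  · rintro ⟨⟨G, hG⟩, ⟨M, hM⟩⟩ ⟨⟨G', hG'⟩, ⟨M', hM'⟩⟩ h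
    simp only [Subtype.mk.injEq] at h
    have e1 : G = G' := by
      funext i
      exact congrFun h (Sum.inl i)
    subst e1
    have e2 : M = M' := by
      funext i j
      have h1 : ∑ i, M i j • G i = ∑ i, M' i j • G i := congrFun h (Sum.inr j)
      rw [← sub_eq_zero, ← Finset.sum_sub_distrib] at h1
      simp only [← sub_smul] at h1
      exact sub_eq_zero.1 (Fintype.linearIndependent_iff.1 hG _ h1 i)
    subst e2
    rfl
  · rintro ⟨V, hV⟩
    have hG : LinearIndependent F (V ∘ Sum.inl) := hV _ Sum.inl_injective
    have hsp := hG.span_eq_top_of_card_eq_finrank' (by simp)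
    have : ∀ j, ∃ c : Fin 4 → F, ∑ i, c i • V (Sum.inl i) = V (Sum.inr j) := by
      intro j
      have : V (Sum.inr j) ∈ Submodule.span F (Set.range (V ∘ Sum.inl)) := by rw [hsp]; trivial
      simpa using (Submodule.mem_span_range_iff_exists_fun F).1 this
    choose c hc using this
    have hVV : VV (V ∘ Sum.inl) (fun i j => c j i) = V := by
      funext s
      rcases s with i | j
      · rfl
      · exact hc j
    refine ⟨⟨⟨V ∘ Sum.inl, hG⟩, ⟨fun i j => c j i, ?_⟩⟩, Subtype.ext hVV⟩
    rw [← mds_iff_V _ hG, hVV]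
    exact hV

lemma card_W :
    Nat.card {V : Fin 4 ⊕ Fin 3 → Fin 3 → F // ArcLI V} =
      Nat.card {G : Fin 3 → Fin 3 → F // LinearIndependent F G} *
        Nat.card {M : Fin 4 → Fin 3 → F // MDS M} := by
  rw [← Nat.card_prod]
  symm
  refine Nat.card_eq_of_bijective (fun p => ⟨WW p.1.1 p.2.1, (mds_iff_W _ p.1.2 _).2 p.2.2⟩) ⟨?_, ?_⟩
  · rintro ⟨⟨G, hG⟩, ⟨M, hM⟩⟩ ⟨⟨G', hG'⟩, ⟨M', hM'⟩⟩ h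
    simp only [Subtype.mk.injEq] at h
    have e1 : G = G' := by
      funext i
      exact congrFun h (Sum.inr i)
    subst e1
    have e2 : M = M' := by
      funext i j
      have h1 : - ∑ j, M i j • G j = - ∑ j, M' i j • G j := congrFun h (Sum.inl i)
      rw [neg_inj, ← sub_eq_zero, ← Finset.sum_sub_distrib] at h1
      simp only [← sub_smul] at h1
      exact sub_eq_zero.1 (Fintype.linearIndependent_iff.1 hG _ h1 j)
    subst e2
    rfl
  · rintro ⟨V, hV⟩
    have hG : LinearIndependent F (V ∘ Sum.inr) := hV _ Sum.inr_injective
    have hsp := hG.span_eq_top_of_card_eq_finrank' (by simp)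
    have : ∀ j, ∃ c : Fin 3 → F, ∑ i, c i • V (Sum.inr i) = - V (Sum.inl j) := by
      intro j
      have : - V (Sum.inl j) ∈ Submodule.span F (Set.range (V ∘ Sum.inr)) := by rw [hsp]; trivial
      simpa using (Submodule.mem_span_range_iff_exists_fun F).1 this
    choose c hc using this
    have hVV : WW (V ∘ Sum.inr) c = V := by
      funext s
      rcases s with i | j
      · simp only [WW, Sum.elim_inl, Function.comp]
        rw [hc, neg_neg]
      · rfl
    refine ⟨⟨⟨V ∘ Sum.inr, hG⟩, ⟨c, ?_⟩⟩, Subtype.ext hVV⟩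
    rw [← mds_iff_W _ hG, hVV]
    exact hV

lemma arcLI_equiv {ι κ : Type} {k : ℕ} (e : ι ≃ κ) (V : κ → Fin k → F) :
    ArcLI (V ∘ e) ↔ ArcLI V := by
  constructor
  · intro h f hf
    have := h (e.symm ∘ f) (e.symm.injective.comp hf)
    convert this using 1
    funext i
    simp
  · intro h f hf
    exact h (e ∘ f) (e.injective.comp hf)

lemma card_arc_equiv {ι κ : Type} {k : ℕ} (e : ι ≃ κ) :
    Nat.card {V : ι → Fin k → F // ArcLI V} = Nat.card {V : κ → Fin k → F // ArcLI V} := by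
  refine Nat.card_congr ((e.arrowCongr (Equiv.refl _)).subtypeEquiv ?_)
  intro V
  rw [← arcLI_equiv e.symm]
  rfl

lemma duality [Fintype F] :
    Nat.card {σ : Fin 7 → ℙ F (Fin 4 → F) // IsArc4 F σ} * (Fintype.card F - 1) ^ 7 *
      Nat.card {G : Fin 3 → Fin 3 → F // LinearIndependent F G} =
    Nat.card {G : Fin 4 → Fin 4 → F // LinearIndependent F G} *
      Nat.card {V : Fin 7 → Fin 3 → F // ArcLI V} := by
  rw [card_arcs, card_arc_equiv (finSumFinEquiv (m := 4) (n := 3)).symm,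
    card_arc_equiv (k := 3) (finSumFinEquiv (m := 4) (n := 3)).symm, card_V, card_W]
  ring

end
end Seven

namespace Seven
open Finset
open scoped Classical
set_option linter.unusedSectionVars false

section
variable {F : Type} [Field F]

/-- The determinant of three vectors. -/
def d3 (a b c : Fin 3 → F) : F :=
  a 0 * (b 1 * c 2 - b 2 * c 1) - a 1 * (b 0 * c 2 - b 2 * c 0) + a 2 * (b 0 * c 1 - b 1 * c 0)

/-- Arcs in the plane, through determinants. -/
def Arc3 {n : ℕ} (v : Fin n → Fin 3 → F) : Prop :=
  ∀ i j k, i ≠ j → i ≠ k → j ≠ k → d3 (v i) (v j) (v k) ≠ 0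

lemma li_iff_d3 (A : Fin 3 → Fin 3 → F) :
    LinearIndependent F A ↔ d3 (A 0) (A 1) (A 2) ≠ 0 := by
  have h1 : LinearIndependent F A ↔ IsUnit (Matrix.of A) :=
    Matrix.linearIndependent_rows_iff_isUnit (A := Matrix.of A)
  rw [h1, Matrix.isUnit_iff_isUnit_det, isUnit_iff_ne_zero, Matrix.det_fin_three]
  simp only [Matrix.of_apply, d3]
  ring_nf

lemma arcLI_iff_arc3 {n : ℕ} (v : Fin n → Fin 3 → F) : ArcLI v ↔ Arc3 v := by
  constructor
  · intro h i j k h1 h2 h3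
    have := h ![i, j, k] (by
      intro a b hab
      fin_cases a <;> fin_cases b <;> simp_all)
    simpa [li_iff_d3] using this
  · intro h f hf
    rw [li_iff_d3]
    exact h _ _ _ (hf.ne (by decide)) (hf.ne (by decide)) (hf.ne (by decide))

lemma d3_swap (a b c : Fin 3 → F) : d3 a c b = - d3 a b c := by simp only [d3]; ring
lemma d3_swap12 (a b c : Fin 3 → F) : d3 b a c = - d3 a b c := by simp only [d3]; ring
lemma d3_rot (a b c : Fin 3 → F) : d3 b c a = d3 a b c := by simp only [d3]; ring
lemma d3_self1 (a c : Fin 3 → F) : d3 a a c = 0 := by simp only [d3]; ring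
lemma d3_self2 (a c : Fin 3 → F) : d3 a c a = 0 := by simp only [d3]; ring
lemma d3_smul (t : F) (a b c : Fin 3 → F) : d3 (t • a) b c = t * d3 a b c := by
  simp only [d3, Pi.smul_apply, smul_eq_mul]; ring

lemma cramer (a b c R : Fin 3 → F) :
    d3 a b c • R = d3 R b c • a + d3 R c a • b + d3 R a b • c := by
  funext i
  fin_cases i <;> simp [d3] <;> ring

/-- The determinant as a linear functional. -/
def dl (a b : Fin 3 → F) : (Fin 3 → F) →ₗ[F] F where
  toFun R := d3 R a b
  map_add' x y := by simp only [d3, Pi.add_apply]; ring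
  map_smul' x y := by simp only [d3, Pi.smul_apply, smul_eq_mul, RingHom.id_apply]; ring

variable [Fintype F]

lemma card_ker {k : ℕ} (L : (Fin 3 → F) →ₗ[F] (Fin k → F)) (hL : Function.Surjective L) :
    #{R | L R = 0} * Fintype.card F ^ k = Fintype.card F ^ 3 := by
  have h1 := LinearMap.finrank_range_add_finrank_ker L
  rw [LinearMap.range_eq_top.2 hL] at h1
  simp at h1
  have h2 := Module.card_eq_pow_finrank (K := F) (V := LinearMap.ker L)
  have h3 : #{R | L R = 0} = Fintype.card (LinearMap.ker L) := by
    rw [Fintype.card_subtype]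
    simp
  rw [h3, h2, ← pow_add]
  congr 1
  omega

lemma card_ker1 (a b c : Fin 3 → F) (h : d3 c a b ≠ 0) :
    #{R | d3 R a b = 0} = Fintype.card F ^ 2 := by
  have := card_ker (k := 1) (LinearMap.pi (fun _ => dl a b)) (by
    intro y
    refine ⟨(y 0 / d3 c a b) • c, ?_⟩
    funext i
    fin_cases i
    simp [dl, h])
  have hq : 0 < Fintype.card F := Fintype.card_pos
  have e : #{R | d3 R a b = 0} = #{R | (LinearMap.pi (fun _ : Fin 1 => dl a b)) R = 0} := by
    congr 1
    ext R
    simp [funext_iff, dl]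
  rw [e]
  have h4 : Fintype.card F ^ 3 = Fintype.card F ^ 2 * Fintype.card F ^ 1 := by ring
  rw [h4] at this
  exact Nat.eq_of_mul_eq_mul_right (by positivity) this

lemma card_ker2 (a b a' b' x y : Fin 3 → F) (h1 : d3 x a b ≠ 0) (h2 : d3 x a' b' = 0)
    (h3 : d3 y a' b' ≠ 0) (h4 : d3 y a b = 0) :
    #{R | d3 R a b = 0 ∧ d3 R a' b' = 0} = Fintype.card F := by
  have := card_ker (k := 2) (LinearMap.pi ![dl a b, dl a' b']) (by
    intro z
    refine ⟨(z 0 / d3 x a b) • x + (z 1 / d3 y a' b') • y, ?_⟩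
    funext i
    fin_cases i
    · have : dl a b ((z 0 / d3 x a b) • x + (z 1 / d3 y a' b') • y) = z 0 := by
        rw [map_add, map_smul, map_smul]
        simp [dl, h1, h4]
      simpa using this
    · have : dl a' b' ((z 0 / d3 x a b) • x + (z 1 / d3 y a' b') • y) = z 1 := by
        rw [map_add, map_smul, map_smul]
        simp [dl, h2, h3]
      simpa using this)
  have hq : 0 < Fintype.card F := Fintype.card_pos
  have e : #{R | d3 R a b = 0 ∧ d3 R a' b' = 0}
      = #{R | (LinearMap.pi ![dl a b, dl a' b']) R = 0} := by
    congr 1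
    ext R
    simp [funext_iff, dl, Fin.forall_fin_two]
  rw [e]
  have h4 : Fintype.card F ^ 3 = Fintype.card F * Fintype.card F ^ 2 := by ring
  rw [h4] at this
  exact Nat.eq_of_mul_eq_mul_right (by positivity) this

/-- The edges of the complete graph. -/
def edges (n : ℕ) : Finset (Fin n × Fin n) := {p | p.1 < p.2}

/-- The edges whose line contains `R`. -/
noncomputable def EE {n : ℕ} (v : Fin n → Fin 3 → F) (R : Fin 3 → F) : Finset (Fin n × Fin n) :=
  {p ∈ edges n | d3 R (v p.1) (v p.2) = 0}

/-- `R` is proportional to a point of `v`. -/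
def Star {n : ℕ} (v : Fin n → Fin 3 → F) (R : Fin 3 → F) : Prop := ∃ a, ∃ t : F, R = t • v a

/-- Nonzero vectors. -/
noncomputable def NZ : Finset (Fin 3 → F) := {R | R ≠ 0}

lemma mem_NZ (R : Fin 3 → F) : R ∈ NZ ↔ R ≠ 0 := by simp [NZ]

lemma star_of {n : ℕ} {v : Fin n → Fin 3 → F} (hv : Arc3 v) {R : Fin 3 → F} {a b c : Fin n}
    (hab : a ≠ b) (hac : a ≠ c) (hbc : b ≠ c) (h1 : d3 R (v a) (v b) = 0)
    (h2 : d3 R (v a) (v c) = 0) : Star v R := by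
  have h := cramer (v a) (v b) (v c) R
  rw [h1, d3_swap R (v a) (v c), h2] at h
  have h0 := hv a b c hab hac hbc
  refine ⟨a, (d3 (v a) (v b) (v c))⁻¹ * d3 R (v b) (v c), ?_⟩
  rw [mul_smul, ← inv_smul_eq_iff₀ (inv_ne_zero h0)]
  simpa using h

lemma EE_star {n : ℕ} {v : Fin n → Fin 3 → F} (hv : Arc3 v) (a : Fin n) (t : F) (ht : t ≠ 0) :
    EE v (t • v a) = {p ∈ edges n | p.1 = a ∨ p.2 = a} := by
  ext p
  simp only [EE, mem_filter, d3_smul, mul_eq_zero, ht, false_or, and_congr_right_iff]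
  intro hp
  simp only [edges, mem_filter, mem_univ, true_and] at hp
  constructor
  · intro h
    by_contra hne
    push Not at hne
    exact hv a p.1 p.2 hne.1.symm hne.2.symm hp.ne h
  · rintro (h | h)
    · rw [h, d3_self1]
    · rw [h, d3_self2]

lemma EE_disj {n : ℕ} {v : Fin n → Fin 3 → F} (hv : Arc3 v) {R : Fin 3 → F} (hR : ¬ Star v R)
    {e f : Fin n × Fin n} (he : e ∈ EE v R) (hf : f ∈ EE v R) (hef : e ≠ f) :
    Disjoint ({e.1, e.2} : Finset (Fin n)) {f.1, f.2} := by
  obtain ⟨a, b⟩ := e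
  obtain ⟨c, d⟩ := f
  simp only [EE, edges, mem_filter, mem_univ, true_and] at he hf
  have he' : d3 R (v b) (v a) = 0 := by rw [d3_swap, he.2, neg_zero]
  have hf' : d3 R (v d) (v c) = 0 := by rw [d3_swap, hf.2, neg_zero]
  have hab := he.1.ne
  have hcd := hf.1.ne
  by_contra hd
  apply hR
  simp only [disjoint_insert_left, disjoint_singleton_left, mem_insert, mem_singleton, not_and_or,
    not_not, not_or] at hd
  simp only [ne_eq, Prod.mk.injEq, not_and] at hef
  rcases hd with (h | h) | (h | h)
  · subst h
    exact star_of hv hab hcd (fun h => hef rfl h) he.2 hf.2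
  · subst h
    refine star_of hv hab hcd.symm ?_ he.2 hf'
    rintro rfl
    exact absurd he.1 (not_lt.2 hf.1.le)
  · subst h
    refine star_of hv hab.symm hcd ?_ he' hf.2
    rintro rfl
    exact absurd he.1 (not_lt.2 hf.1.le)
  · subst h
    exact star_of hv hab.symm hcd.symm (fun h => hef h rfl) he' hf'

lemma EE_card_le {n : ℕ} {v : Fin n → Fin 3 → F} (hv : Arc3 v) {R : Fin 3 → F} (hR : ¬ Star v R) :
    2 * #(EE v R) ≤ n := by
  have h1 : #((EE v R).biUnion (fun e => ({e.1, e.2} : Finset (Fin n)))) = 2 * #(EE v R) := by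
    rw [card_biUnion (fun e he f hf hef => EE_disj hv hR he hf hef)]
    rw [sum_const_nat (m := 2)]
    · ring
    · intro e he
      simp only [EE, edges, mem_filter, mem_univ, true_and] at he
      exact card_pair he.1.ne
  rw [← h1]
  simpa using card_le_univ ((EE v R).biUnion (fun e => ({e.1, e.2} : Finset (Fin n))))

lemma card_NZ : (#(NZ : Finset (Fin 3 → F)) : ℤ) = (Fintype.card F : ℤ) ^ 3 - 1 := by
  have : (NZ : Finset (Fin 3 → F)) = univ.erase 0 := by ext; simp [NZ]
  rw [this, card_erase_of_mem (mem_univ _)]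
  have : 1 ≤ Fintype.card F ^ 3 := Nat.one_le_pow _ _ Fintype.card_pos
  simp
  push_cast [Nat.cast_sub this]
  rfl

lemma card_NZ_filter (P : (Fin 3 → F) → Prop) [DecidablePred P] (h0 : P 0) :
    (#{R ∈ NZ | P R} : ℤ) = #{R | P R} - 1 := by
  have : ({R ∈ NZ | P R} : Finset (Fin 3 → F)) = ({R | P R} : Finset _).erase 0 := by
    ext; simp [NZ]
  rw [this, card_erase_of_mem (by simpa)]
  have : 1 ≤ #{R | P R} := card_pos.2 ⟨0, by simpa⟩
  push_cast [Nat.cast_sub this]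
  rfl

lemma d3_zero (a b : Fin 3 → F) : d3 0 a b = 0 := by simp [d3]

lemma card_star {n : ℕ} (hn : 3 ≤ n) {v : Fin n → Fin 3 → F} (hv : Arc3 v) :
    (#{R ∈ NZ | Star v R} : ℤ) = n * ((Fintype.card F : ℤ) - 1) := by
  have hex : ∀ a b : Fin n, ∃ c, a ≠ c ∧ b ≠ c := by
    intro a b
    have : ∃ c, c ∉ ({a, b} : Finset (Fin n)) := by
      by_contra h
      push Not at h
      have h1 : ({a, b} : Finset (Fin n)) = univ := by ext; simp [h]
      have h2 : #({a, b} : Finset (Fin n)) ≤ 2 := card_le_two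
      rw [h1] at h2
      simp at h2
      omega
    obtain ⟨c, hc⟩ := this
    simp only [mem_insert, mem_singleton, not_or] at hc
    exact ⟨c, Ne.symm hc.1, Ne.symm hc.2⟩
  have hvne : ∀ a, v a ≠ 0 := by
    intro a h
    obtain ⟨b, hb, -⟩ := hex a a
    obtain ⟨c, hc, hc'⟩ := hex a b
    apply hv a b c hb hc hc'
    rw [h, d3_zero]
  have : ({R ∈ NZ | Star v R} : Finset (Fin 3 → F))
      = (univ : Finset (Fin n × Fˣ)).image (fun p => p.2 • v p.1) := by
    ext R
    rw [mem_filter, mem_NZ, mem_image]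
    simp only [Star, mem_univ, true_and, Prod.exists]
    constructor
    · rintro ⟨h0, a, t, rfl⟩
      have ht : t ≠ 0 := by rintro rfl; simp at h0
      exact ⟨a, Units.mk0 t ht, rfl⟩
    · rintro ⟨a, t, rfl⟩
      refine ⟨?_, a, t, rfl⟩
      rw [Units.smul_def]
      exact smul_ne_zero t.ne_zero (hvne a)
  rw [this, card_image_of_injective]
  · have : 1 ≤ Fintype.card F := Fintype.card_pos
    simp [Fintype.card_units]
    push_cast [Nat.cast_sub this]
    simp
  · rintro ⟨a, s⟩ ⟨b, t⟩ h
    simp only [Units.smul_def] at h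
    by_cases hab : a = b
    · subst hab
      have := smul_left_injective F (hvne a) h
      simp only [Prod.mk.injEq, true_and]
      ext
      exact this
    · exfalso
      obtain ⟨c, hc, hc'⟩ := hex a b
      have h1 : d3 ((s : F) • v a) (v b) (v c) = 0 := by
        rw [h, d3_smul, d3_self1, mul_zero]
      rw [d3_smul] at h1
      rcases mul_eq_zero.1 h1 with h2 | h2
      · exact s.ne_zero h2
      · exact hv a b c hab hc hc' h2

lemma exists_third {n : ℕ} (hn : 3 ≤ n) (a b : Fin n) : ∃ c, a ≠ c ∧ b ≠ c := by
    have : ∃ c, c ∉ ({a, b} : Finset (Fin n)) := by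
      by_contra h
      push Not at h
      have h1 : ({a, b} : Finset (Fin n)) = univ := by ext; simp [h]
      have h2 : #({a, b} : Finset (Fin n)) ≤ 2 := card_le_two
      rw [h1] at h2
      simp at h2
      omega
    obtain ⟨c, hc⟩ := this
    simp only [mem_insert, mem_singleton, not_or] at hc
    exact ⟨c, Ne.symm hc.1, Ne.symm hc.2⟩

lemma sum_e {n : ℕ} (hn : 3 ≤ n) {v : Fin n → Fin 3 → F} (hv : Arc3 v) :
    (∑ R ∈ NZ, #(EE v R) : ℤ) = #(edges n) * ((Fintype.card F : ℤ) ^ 2 - 1) := by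
  have h1 := sum_card_bipartiteAbove_eq_sum_card_bipartiteBelow (s := (NZ : Finset (Fin 3 → F)))
    (t := edges n) (fun R p => d3 R (v p.1) (v p.2) = 0)
  have h2 : (∑ R ∈ NZ, #(EE v R) : ℤ) = ((∑ R ∈ NZ, #(EE v R) : ℕ) : ℤ) := by push_cast; rfl
  rw [h2]
  have h3 : (∑ R ∈ NZ, #(EE v R)) = ∑ p ∈ edges n, #{R ∈ NZ | d3 R (v p.1) (v p.2) = 0} := h1
  rw [h3]
  push_cast
  rw [sum_congr rfl (g := fun _ => (Fintype.card F : ℤ) ^ 2 - 1)]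
  · simp [mul_sub]
  · intro p hp
    simp only [edges, mem_filter, mem_univ, true_and] at hp
    obtain ⟨c, hc1, hc2⟩ := exists_third hn p.1 p.2
    rw [card_NZ_filter _ (d3_zero _ _),
      card_ker1 _ _ (v c) (hv _ _ _ hc1.symm hc2.symm hp.ne)]
    push_cast
    rfl

lemma card_two {n : ℕ} {v : Fin n → Fin 3 → F} (hv : Arc3 v)
    {e f : Fin n × Fin n} (he : e ∈ edges n) (hf : f ∈ edges n) (hef : e ≠ f) :
    #{R | d3 R (v e.1) (v e.2) = 0 ∧ d3 R (v f.1) (v f.2) = 0} = Fintype.card F := by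
  obtain ⟨a, b⟩ := e
  obtain ⟨c, d⟩ := f
  simp only [edges, mem_filter, mem_univ, true_and] at he hf
  have hx : ∃ x, (x = c ∨ x = d) ∧ x ≠ a ∧ x ≠ b := by
    by_contra h
    push Not at h
    have h1 := h c (Or.inl rfl)
    have h2 := h d (Or.inr rfl)
    apply hef
    by_cases hca : c = a
    · subst hca
      rw [h2 hf.ne']
    · have := h1 hca
      subst this
      by_cases hda : d = a
      · subst hda
        exact absurd he (not_lt.2 hf.le)
      · exact absurd (h2 hda) hf.ne'
  have hy : ∃ y, (y = a ∨ y = b) ∧ y ≠ c ∧ y ≠ d := by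
    by_contra h
    push Not at h
    have h1 := h a (Or.inl rfl)
    have h2 := h b (Or.inr rfl)
    apply hef
    by_cases hca : a = c
    · subst hca
      rw [h2 he.ne']
    · have := h1 hca
      subst this
      by_cases hda : b = c
      · subst hda
        exact absurd he (not_lt.2 hf.le)
      · exact absurd (h2 hda) he.ne'
  obtain ⟨x, hx, hxa, hxb⟩ := hx
  obtain ⟨y, hy, hyc, hyd⟩ := hy
  apply card_ker2 _ _ _ _ (v x) (v y) (hv _ _ _ hxa hxb he.ne) _ (hv _ _ _ hyc hyd hf.ne)
  · rcases hy with rfl | rfl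
    · exact d3_self1 _ _
    · exact d3_self2 _ _
  · rcases hx with rfl | rfl
    · exact d3_self1 _ _
    · exact d3_self2 _ _

lemma sum_e2 {n : ℕ} {v : Fin n → Fin 3 → F} (hv : Arc3 v) :
    (∑ R ∈ NZ, ((#(EE v R)).choose 2 : ℤ)) =
      ((#(edges n)).choose 2 : ℤ) * ((Fintype.card F : ℤ) - 1) := by
  have h1 := sum_card_bipartiteAbove_eq_sum_card_bipartiteBelow (s := (NZ : Finset (Fin 3 → F)))
    (t := powersetCard 2 (edges n)) (fun R M => M ⊆ EE v R)
  have h2 : (∑ R ∈ NZ, ((#(EE v R)).choose 2 : ℤ)) =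
      ((∑ R ∈ NZ, (#(EE v R)).choose 2 : ℕ) : ℤ) := by push_cast; rfl
  have h3 : ∀ R, (#(EE v R)).choose 2 = #{M ∈ powersetCard 2 (edges n) | M ⊆ EE v R} := by
    intro R
    rw [← card_powersetCard]
    congr 1
    ext M
    simp only [mem_powersetCard, mem_filter]
    constructor
    · rintro ⟨h, h'⟩
      exact ⟨⟨h.trans (filter_subset _ _), h'⟩, h⟩
    · rintro ⟨⟨_, h'⟩, h⟩
      exact ⟨h, h'⟩
  rw [h2, sum_congr rfl (fun R _ => h3 R)]
  rw [show ∑ R ∈ NZ, #{M ∈ powersetCard 2 (edges n) | M ⊆ EE v R} =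
    ∑ M ∈ powersetCard 2 (edges n), #{R ∈ NZ | M ⊆ EE v R} from h1]
  push_cast
  rw [sum_congr rfl (g := fun _ => (Fintype.card F : ℤ) - 1)]
  · simp [mul_sub]
  · intro M hM
    rw [mem_powersetCard, card_eq_two] at hM
    obtain ⟨hM, e, f, hef, rfl⟩ := hM
    have he : e ∈ edges n := hM (by simp)
    have hf : f ∈ edges n := hM (by simp)
    rw [← card_two hv he hf hef, ← card_NZ_filter (fun R => d3 R (v e.1) (v e.2) = 0 ∧ d3 R (v f.1) (v f.2) = 0)
      ⟨d3_zero _ _, d3_zero _ _⟩]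
    congr 2
    ext R
    simp [insert_subset_iff, EE, he, hf]

theorem ext_count {n : ℕ} (hn : 3 ≤ n) (hn6 : n ≤ 6) {v : Fin n → Fin 3 → F} (hv : Arc3 v) :
    (#{R ∈ NZ | EE v R = ∅} : ℤ) = (Fintype.card F : ℤ) ^ 3 - 1
      - #(edges n) * ((Fintype.card F : ℤ) ^ 2 - 1)
      + ((#(edges n)).choose 2 : ℤ) * ((Fintype.card F : ℤ) - 1)
      - ((n - 2).choose 2 : ℤ) * (n * ((Fintype.card F : ℤ) - 1))
      - #{R ∈ NZ | ¬ Star v R ∧ #(EE v R) = 3} := by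
  rw [← card_NZ, ← sum_e hn hv, ← sum_e2 hv, ← card_star hn hv]
  simp only [card_filter, card_eq_sum_ones NZ]
  push_cast
  rw [mul_sum, ← sum_sub_distrib, ← sum_add_distrib, ← sum_sub_distrib, ← sum_sub_distrib]
  apply sum_congr rfl
  intro R hR
  by_cases hs : Star v R
  · obtain ⟨a, t, rfl⟩ := hs
    have ht : t ≠ 0 := by rintro rfl; simp [NZ] at hR
    have hs : Star v (t • v a) := ⟨a, t, rfl⟩
    simp only [hs, not_true, false_and, if_true, if_false]
    simp only [← card_eq_zero]
    rw [EE_star hv a t ht]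
    have : #{p ∈ edges n | p.1 = a ∨ p.2 = a} = n - 1 := by
      clear hs hR hv ht
      clear v
      revert a
      interval_cases n <;> decide
    rw [this]
    interval_cases n <;> simp [Nat.choose]
  · have h := EE_card_le hv hs
    simp only [hs, not_false_eq_true, true_and, if_false]
    simp only [← card_eq_zero]
    have h3 : #(EE v R) ≤ 3 := by omega
    interval_cases #(EE v R) <;> simp [Nat.choose]

end
end Seven

namespace Seven
open Finset
open scoped Classical
set_option linter.unusedSectionVars false

section
variable {F : Type} [Field F]

lemma arc3_of_sorted {n : ℕ} {v : Fin n → Fin 3 → F}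
    (h : ∀ i j k, i < j → j < k → d3 (v i) (v j) (v k) ≠ 0) : Arc3 v := by
  intro i j k hij hik hjk h0
  have e1 : d3 (v i) (v k) (v j) = 0 := by rw [d3_swap, h0, neg_zero]
  have e2 : d3 (v j) (v i) (v k) = 0 := by rw [d3_swap12, h0, neg_zero]
  have e3 : d3 (v j) (v k) (v i) = 0 := by rw [d3_rot, h0]
  have e4 : d3 (v k) (v i) (v j) = 0 := by rw [← d3_rot, h0]
  have e5 : d3 (v k) (v j) (v i) = 0 := by rw [d3_swap, e4, neg_zero]
  rcases lt_or_gt_of_ne hij with a | a <;> rcases lt_or_gt_of_ne hik with b | b <;>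
    rcases lt_or_gt_of_ne hjk with c | c
  · exact h _ _ _ a c h0
  · exact h _ _ _ b c e1
  · exact absurd (a.trans c) (not_lt.2 b.le)
  · exact h _ _ _ b a e4
  · exact h _ _ _ a b e2
  · exact absurd (b.trans c) (not_lt.2 a.le)
  · exact h _ _ _ c b e3
  · exact h _ _ _ c a e5

variable [Fintype F]

/-- The finset of arcs. -/
noncomputable def AA (F : Type) [Field F] [Fintype F] (n : ℕ) : Finset (Fin n → Fin 3 → F) :=
  {v | Arc3 v}

lemma mem_AA {n : ℕ} (v : Fin n → Fin 3 → F) : v ∈ AA F n ↔ Arc3 v := by simp [AA]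

lemma EE_empty_iff {n : ℕ} (v : Fin n → Fin 3 → F) (R : Fin 3 → F) :
    EE v R = ∅ ↔ ∀ i j, i < j → d3 R (v i) (v j) ≠ 0 := by
  simp [EE, edges, filter_eq_empty_iff]

lemma arc3_cons {n : ℕ} (hn : 2 ≤ n) (v : Fin n → Fin 3 → F) (R : Fin 3 → F) :
    Arc3 (Fin.cons R v : Fin (n + 1) → Fin 3 → F) ↔ Arc3 v ∧ R ∈ NZ ∧ EE v R = ∅ := by
  rw [EE_empty_iff, mem_NZ]
  constructor
  · intro h
    have h2 : ∀ i j, i < j → d3 R (v i) (v j) ≠ 0 := by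
      intro i j hij
      have := h 0 i.succ j.succ (Fin.succ_ne_zero _).symm (Fin.succ_ne_zero _).symm (by simpa using hij.ne)
      simpa using this
    refine ⟨?_, ?_, h2⟩
    · intro i j k h1 h2 h3
      have := h i.succ j.succ k.succ (by simpa using h1) (by simpa using h2) (by simpa using h3)
      simpa using this
    · rintro rfl
      exact h2 ⟨0, by omega⟩ ⟨1, by omega⟩ (by simp) (d3_zero _ _)
  · rintro ⟨h1, -, h2⟩
    apply arc3_of_sorted
    intro i j k hij hjk
    have hj : j ≠ 0 := (lt_of_le_of_lt (Fin.zero_le _) hij).ne'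
    have hk : k ≠ 0 := (lt_of_le_of_lt (Fin.zero_le _) hjk).ne'
    obtain ⟨j, rfl⟩ := Fin.exists_succ_eq.2 hj
    obtain ⟨k, rfl⟩ := Fin.exists_succ_eq.2 hk
    have hjk' : j < k := by simpa using hjk
    rcases Fin.eq_zero_or_eq_succ i with rfl | ⟨i, rfl⟩
    · simpa using h2 j k hjk'
    · have hij' : i < j := by simpa using hij
      simpa using h1 i j k hij'.ne (hij'.trans hjk').ne hjk'.ne

lemma card_AA_succ {n : ℕ} (hn : 2 ≤ n) :
    #(AA F (n + 1)) = ∑ v ∈ AA F n, #{R ∈ NZ | EE v R = ∅} := by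
  rw [← card_sigma]
  refine card_nbij' (fun w => ⟨Fin.tail w, w 0⟩) (fun p => Fin.cons p.2 p.1) ?_ ?_ ?_ ?_
  · intro w hw
    have hw' : Arc3 w := (mem_AA _).1 hw
    rw [← Fin.cons_self_tail w, arc3_cons hn] at hw'
    simp only [coe_sigma, Set.mem_sigma_iff, mem_coe, mem_filter, mem_AA]
    exact hw'
  · rintro ⟨v, R⟩ hp
    simp only [coe_sigma, Set.mem_sigma_iff, mem_coe, mem_filter, mem_AA] at hp
    simp only [mem_coe, mem_AA]
    exact (arc3_cons hn _ _).2 hp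
  · intro w _
    exact Fin.cons_self_tail w
  · rintro ⟨v, R⟩ _
    simp

lemma card_AA3 : #(AA F 3) = Nat.card {G : Fin 3 → Fin 3 → F // LinearIndependent F G} := by
  rw [Nat.card_eq_fintype_card, Fintype.card_subtype]
  congr 1
  ext G
  rw [mem_AA, mem_filter, li_iff_d3]
  simp only [mem_univ, true_and]
  constructor
  · intro h
    exact h 0 1 2 (by decide) (by decide) (by decide)
  · intro h
    apply arc3_of_sorted
    intro i j k hij hjk
    have : i = 0 ∧ j = 1 ∧ k = 2 := by omega
    obtain ⟨rfl, rfl, rfl⟩ := this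
    exact h

lemma ext_zero {n : ℕ} (hn6 : n ≤ 5) {v : Fin n → Fin 3 → F} (hv : Arc3 v) :
    #{R ∈ NZ | ¬ Star v R ∧ #(EE v R) = 3} = 0 := by
  rw [card_eq_zero, filter_eq_empty_iff]
  rintro R - ⟨h1, h2⟩
  have := EE_card_le hv h1
  omega

lemma card_AA4 : (#(AA F 4) : ℤ) = #(AA F 3) * ((Fintype.card F : ℤ) - 1) ^ 3 := by
  rw [card_AA_succ (by norm_num)]
  push_cast
  rw [sum_congr rfl (g := fun _ => ((Fintype.card F : ℤ) - 1) ^ 3)]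
  · simp
  · intro v hv
    rw [mem_AA] at hv
    rw [ext_count (by norm_num) (by norm_num) hv, ext_zero (by norm_num) hv,
      show #(edges 3) = 3 by decide]
    norm_num [Nat.choose]
    ring

lemma card_AA5 : (#(AA F 5) : ℤ) = #(AA F 4) * (((Fintype.card F : ℤ) - 1) *
    ((Fintype.card F : ℤ) ^ 2 - 5 * Fintype.card F + 6)) := by
  rw [card_AA_succ (by norm_num)]
  push_cast
  rw [sum_congr rfl (g := fun _ => (((Fintype.card F : ℤ) - 1) *
    ((Fintype.card F : ℤ) ^ 2 - 5 * Fintype.card F + 6)))]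
  · simp
  · intro v hv
    rw [mem_AA] at hv
    rw [ext_count (by norm_num) (by norm_num) hv, ext_zero (by norm_num) hv,
      show #(edges 4) = 6 by decide]
    norm_num [Nat.choose]
    ring

lemma card_AA6 : (#(AA F 6) : ℤ) = #(AA F 5) * (((Fintype.card F : ℤ) - 1) *
    ((Fintype.card F : ℤ) ^ 2 - 9 * Fintype.card F + 21)) := by
  rw [card_AA_succ (by norm_num)]
  push_cast
  rw [sum_congr rfl (g := fun _ => (((Fintype.card F : ℤ) - 1) *
    ((Fintype.card F : ℤ) ^ 2 - 9 * Fintype.card F + 21)))]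
  · simp
  · intro v hv
    rw [mem_AA] at hv
    rw [ext_count (by norm_num) (by norm_num) hv, ext_zero (by norm_num) hv,
      show #(edges 5) = 10 by decide]
    norm_num [Nat.choose]
    ring

/-- Synthemes of six points. -/
def Synth : Finset (Finset (Fin 6 × Fin 6)) :=
  {s ∈ powersetCard 3 (edges 6) | ∀ e ∈ s, ∀ f ∈ s, e ≠ f →
    e.1 ≠ f.1 ∧ e.1 ≠ f.2 ∧ e.2 ≠ f.1 ∧ e.2 ≠ f.2}

lemma card_Synth : #Synth = 15 := by
  decide +kernel

lemma synth_pointwise {v : Fin 6 → Fin 3 → F} (hv : Arc3 v) {R : Fin 3 → F} (hR : R ∈ NZ) :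
    (if ¬ Star v R ∧ #(EE v R) = 3 then 1 else 0) = #{s ∈ Synth | s ⊆ EE v R} := by
  by_cases hs : Star v R
  · rw [if_neg (by tauto)]
    symm
    rw [card_eq_zero, filter_eq_empty_iff]
    intro s hs' hsub
    obtain ⟨a, t, rfl⟩ := hs
    have ht : t ≠ 0 := by
      rintro rfl
      rw [mem_NZ] at hR
      simp at hR
    rw [EE_star hv a t ht] at hsub
    simp only [Synth, mem_filter, mem_powersetCard, card_eq_three] at hs'
    obtain ⟨⟨_, e, f, g, h1, h2, h3, rfl⟩, hd⟩ := hs'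
    have he := (mem_filter.1 (hsub (show e ∈ ({e, f, g} : Finset _) by simp))).2
    have hf := (mem_filter.1 (hsub (show f ∈ ({e, f, g} : Finset _) by simp))).2
    obtain ⟨k1, k2, k3, k4⟩ := hd e (by simp) f (by simp) h1
    rcases he with he | he <;> rcases hf with hf | hf <;> simp_all
  · have hle := EE_card_le hv hs
    by_cases h3 : #(EE v R) = 3
    · rw [if_pos ⟨hs, h3⟩]
      symm
      rw [card_eq_one]
      refine ⟨EE v R, ?_⟩
      ext s
      simp only [mem_filter, mem_singleton]
      constructor
      · rintro ⟨h, h'⟩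
        apply eq_of_subset_of_card_le h'
        simp only [Synth, mem_filter, mem_powersetCard] at h
        omega
      · rintro rfl
        refine ⟨?_, Subset.refl _⟩
        simp only [Synth, mem_filter, mem_powersetCard]
        refine ⟨⟨filter_subset _ _, h3⟩, ?_⟩
        intro e he f hf hef
        have := EE_disj hv hs he hf hef
        simp only [disjoint_insert_left, disjoint_singleton_left, mem_insert, mem_singleton,
          not_or] at this
        tauto
    · rw [if_neg (by tauto)]
      symm
      rw [card_eq_zero, filter_eq_empty_iff]
      intro s hs' hsub
      have := card_le_card hsub
      simp only [Synth, mem_filter, mem_powersetCard] at hs'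
      omega

/-- Concurrent configurations. -/
noncomputable def TT (F : Type) [Field F] [Fintype F] :
    Finset ((Fin 6 → Fin 3 → F) × (Fin 3 → F)) :=
  {p ∈ AA F 6 ×ˢ NZ | d3 p.2 (p.1 0) (p.1 1) = 0 ∧ d3 p.2 (p.1 2) (p.1 3) = 0 ∧
    d3 p.2 (p.1 4) (p.1 5) = 0}

lemma arc3_perm {n : ℕ} (v : Fin n → Fin 3 → F) (π : Fin n → Fin n) (hπ : Function.Injective π)
    (hv : Arc3 v) : Arc3 (v ∘ π) := by
  intro i j k h1 h2 h3
  exact hv _ _ _ (hπ.ne h1) (hπ.ne h2) (hπ.ne h3)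

lemma card_synth_conf {s : Finset (Fin 6 × Fin 6)} (hs : s ∈ Synth) :
    #{p ∈ AA F 6 ×ˢ NZ | s ⊆ EE p.1 p.2} = #(TT F) := by
  simp only [Synth, mem_filter, mem_powersetCard, card_eq_three] at hs
  obtain ⟨⟨hsub, e, f, g, h1, h2, h3, rfl⟩, hd⟩ := hs
  have he : e ∈ edges 6 := hsub (by simp)
  have hf : f ∈ edges 6 := hsub (by simp)
  have hg : g ∈ edges 6 := hsub (by simp)
  obtain ⟨a1, a2, a3, a4⟩ := hd e (by simp) f (by simp) h1
  obtain ⟨b1, b2, b3, b4⟩ := hd e (by simp) g (by simp) h2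
  obtain ⟨c1, c2, c3, c4⟩ := hd f (by simp) g (by simp) h3
  have he' : e.1 ≠ e.2 := by simp [edges] at he; exact he.ne
  have hf' : f.1 ≠ f.2 := by simp [edges] at hf; exact hf.ne
  have hg' : g.1 ≠ g.2 := by simp [edges] at hg; exact hg.ne
  have hinj : Function.Injective ![e.1, e.2, f.1, f.2, g.1, g.2] := by
    intro i j hij
    fin_cases i <;> fin_cases j <;> first | rfl | (exfalso; simp at hij; simp_all)
  let π : Fin 6 ≃ Fin 6 := Equiv.ofBijective _ (Finite.injective_iff_bijective.1 hinj)
  have p0 : π 0 = e.1 := rfl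
  have p1 : π 1 = e.2 := rfl
  have p2 : π 2 = f.1 := rfl
  have p3 : π 3 = f.2 := rfl
  have p4 : π 4 = g.1 := rfl
  have p5 : π 5 = g.2 := rfl
  refine card_nbij' (fun p => (p.1 ∘ π, p.2)) (fun p => (p.1 ∘ π.symm, p.2)) ?_ ?_ ?_ ?_
  · rintro ⟨v, R⟩ h
    simp only [coe_filter, mem_product, mem_AA, Set.mem_ofPred_eq, insert_subset_iff,
      singleton_subset_iff, EE, mem_filter, he, hf, hg, true_and] at h
    simp only [TT, coe_filter, mem_product, mem_AA, Set.mem_ofPred_eq, Function.comp, p0, p1, p2,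
      p3, p4, p5]
    exact ⟨⟨arc3_perm _ _ π.injective h.1.1, h.1.2⟩, h.2⟩
  · rintro ⟨v, R⟩ h
    simp only [TT, coe_filter, mem_product, mem_AA, Set.mem_ofPred_eq] at h
    simp only [coe_filter, mem_product, mem_AA, Set.mem_ofPred_eq, insert_subset_iff,
      singleton_subset_iff, EE, mem_filter, he, hf, hg, true_and, Function.comp, ← p0, ← p1, ← p2,
      ← p3, ← p4, ← p5, Equiv.symm_apply_apply]
    exact ⟨⟨arc3_perm _ _ π.symm.injective h.1.1, h.1.2⟩, h.2⟩
  · rintro ⟨v, R⟩ _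
    simp [Function.comp_def]
  · rintro ⟨v, R⟩ _
    simp [Function.comp_def]

lemma sum_three : ∑ v ∈ AA F 6, #{R ∈ NZ | ¬ Star v R ∧ #(EE v R) = 3} = 15 * #(TT F) := by
  have h1 : ∀ v ∈ AA F 6, #{R ∈ NZ | ¬ Star v R ∧ #(EE v R) = 3} =
      ∑ R ∈ NZ, #{s ∈ Synth | s ⊆ EE v R} := by
    intro v hv
    rw [card_filter]
    exact sum_congr rfl (fun R hR => synth_pointwise ((mem_AA v).1 hv) hR)
  rw [sum_congr rfl h1, ← sum_product']
  have h2 := sum_card_bipartiteAbove_eq_sum_card_bipartiteBelow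
    (s := (AA F 6 ×ˢ NZ : Finset ((Fin 6 → Fin 3 → F) × (Fin 3 → F))))
    (t := Synth) (fun p s => s ⊆ EE p.1 p.2)
  refine Eq.trans h2 ?_
  rw [sum_congr rfl (g := fun _ => #(TT F))]
  · simp [card_Synth]
  · intro s hs
    exact card_synth_conf hs

lemma card_AA7 : (#(AA F 7) : ℤ) = #(AA F 6) * (((Fintype.card F : ℤ) - 1) *
    ((Fintype.card F : ℤ) ^ 2 - 14 * Fintype.card F + 55)) - 15 * #(TT F) := by
  have h := congrArg (Nat.cast : ℕ → ℤ) (sum_three (F := F))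
  rw [Nat.cast_sum, Nat.cast_mul, Nat.cast_ofNat] at h
  rw [card_AA_succ (by norm_num), ← h]
  push_cast
  rw [sum_congr rfl (g := fun v => (((Fintype.card F : ℤ) - 1) *
    ((Fintype.card F : ℤ) ^ 2 - 14 * Fintype.card F + 55)) -
      (#{R ∈ NZ | ¬ Star v R ∧ #(EE v R) = 3} : ℤ))]
  · rw [sum_sub_distrib]
    simp
  · intro v hv
    rw [mem_AA] at hv
    rw [ext_count (by norm_num) (by norm_num) hv,
      show #(edges 6) = 15 by decide]
    norm_num [Nat.choose]
    ring

end
end Seven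

namespace Seven
open Finset
open scoped Classical
set_option linter.unusedSectionVars false

section
variable {F : Type} [Field F]

/-- Linear combinations of the rows of `g`. -/
def comb (g : Fin 3 → Fin 3 → F) (w : Fin 3 → F) : Fin 3 → F :=
  w 0 • g 0 + w 1 • g 1 + w 2 • g 2

lemma d3_comb (g : Fin 3 → Fin 3 → F) (a b c : Fin 3 → F) :
    d3 (comb g a) (comb g b) (comb g c) = d3 a b c * d3 (g 0) (g 1) (g 2) := by
  simp only [d3, comb, Pi.add_apply, Pi.smul_apply, smul_eq_mul]
  ring

lemma comb_inj {g : Fin 3 → Fin 3 → F} (hg : d3 (g 0) (g 1) (g 2) ≠ 0) {a b : Fin 3 → F}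
    (h : comb g a = comb g b) : a = b := by
  have key : ∀ (x y : Fin 3 → F), d3 (comb g a) (comb g x) (comb g y) =
    d3 (comb g b) (comb g x) (comb g y) := by rw [h]; intros; rfl
  have key2 : ∀ x y, d3 a x y = d3 b x y := by
    intro x y
    have := key x y
    rw [d3_comb, d3_comb] at this
    exact mul_right_cancel₀ hg this
  have k0 := key2 ![0, 1, 0] ![0, 0, 1]
  have k1 := key2 ![0, 0, 1] ![1, 0, 0]
  have k2 := key2 ![1, 0, 0] ![0, 1, 0]
  simp [d3] at k0 k1 k2
  funext i
  fin_cases i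
  · exact k0
  · exact k1
  · exact k2

lemma comb_surj {g : Fin 3 → Fin 3 → F} (hg : d3 (g 0) (g 1) (g 2) ≠ 0) (R : Fin 3 → F) :
    ∃ w, comb g w = R := by
  refine ⟨(d3 (g 0) (g 1) (g 2))⁻¹ • ![d3 R (g 1) (g 2), d3 R (g 2) (g 0), d3 R (g 0) (g 1)], ?_⟩
  have h := cramer (g 0) (g 1) (g 2) R
  have h2 : R = (d3 (g 0) (g 1) (g 2))⁻¹ • (d3 (g 0) (g 1) (g 2) • R) := by
    rw [smul_smul, inv_mul_cancel₀ hg, one_smul]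
  rw [h] at h2
  refine Eq.trans ?_ h2.symm
  simp [comb, smul_add, smul_smul]

/-- Normalised concurrent configurations. -/
def NormC (w : Fin 6 → Fin 3 → F) : Prop :=
  Arc3 w ∧ w 0 = ![0, 1, 0] ∧ w 2 = ![0, 0, 1] ∧ w 1 2 = 0 ∧ w 3 1 = 0 ∧
    w 4 1 * w 5 2 = w 4 2 * w 5 1

variable [Fintype F]

lemma card_TT_eq : #(TT F) = Nat.card {G : Fin 3 → Fin 3 → F // LinearIndependent F G} *
    Nat.card {w : Fin 6 → Fin 3 → F // NormC w} := by
  have h1 : #(TT F) = Nat.card {p // p ∈ TT F} := by simp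
  rw [h1, ← Nat.card_prod]
  symm
  have e0 : ∀ g : Fin 3 → Fin 3 → F, comb g ![1, 0, 0] = g 0 := by intro g; simp [comb]
  have e1 : ∀ g : Fin 3 → Fin 3 → F, comb g ![0, 1, 0] = g 1 := by intro g; simp [comb]
  have e2 : ∀ g : Fin 3 → Fin 3 → F, comb g ![0, 0, 1] = g 2 := by intro g; simp [comb]
  have harc : ∀ (g : Fin 3 → Fin 3 → F), d3 (g 0) (g 1) (g 2) ≠ 0 → ∀ w : Fin 6 → Fin 3 → F,
      (Arc3 (fun i => comb g (w i)) ↔ Arc3 w) := by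
    intro g hg w
    simp only [Arc3, d3_comb, ne_eq, mul_eq_zero, hg, or_false]
  have hmem : ∀ (g : Fin 3 → Fin 3 → F), d3 (g 0) (g 1) (g 2) ≠ 0 → ∀ w : Fin 6 → Fin 3 → F,
      w 0 = ![0, 1, 0] → w 2 = ![0, 0, 1] →
      (((fun i => comb g (w i)), g 0) ∈ TT F ↔ NormC w) := by
    intro g hg w h0 h2
    have hg0 : g 0 ≠ 0 := by
      intro h
      rw [h, d3_zero] at hg
      exact hg rfl
    simp only [TT, mem_filter, mem_product, mem_AA, mem_NZ, harc g hg, NormC]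
    rw [← e0 g]
    simp only [d3_comb, mul_eq_zero, hg, or_false]
    rw [e0 g]
    simp only [h0, h2]
    simp [d3, hg0, sub_eq_zero]
  refine Nat.card_eq_of_bijective (fun p => ⟨((fun i => comb p.1.1 (p.2.1 i)), p.1.1 0),
    (hmem _ ((li_iff_d3 _).1 p.1.2) _ p.2.2.2.1 p.2.2.2.2.1).2 p.2.2⟩) ⟨?_, ?_⟩
  · rintro ⟨⟨g, hg⟩, ⟨w, hw⟩⟩ ⟨⟨g', hg'⟩, ⟨w', hw'⟩⟩ h
    simp only [Subtype.mk.injEq, Prod.mk.injEq] at h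
    have hgg : g = g' := by
      funext i
      fin_cases i
      · exact h.2
      · have := congrFun h.1 0
        simp only [hw.2.1, hw'.2.1, e1] at this
        exact this
      · have := congrFun h.1 2
        simp only [hw.2.2.1, hw'.2.2.1, e2] at this
        exact this
    subst hgg
    have hww : w = w' := by
      funext i
      exact comb_inj ((li_iff_d3 _).1 hg) (congrFun h.1 i)
    subst hww
    rfl
  · rintro ⟨⟨v, R⟩, hp⟩
    have hp' := hp
    simp only [TT, mem_filter, mem_product, mem_AA, mem_NZ] at hp'
    obtain ⟨⟨hv, hR⟩, h01, h23, h45⟩ := hp'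
    have hd : d3 R (v 0) (v 2) ≠ 0 := by
      intro h
      have c1 := cramer (v 0) (v 1) (v 2) R
      have c2 := cramer (v 0) (v 2) (v 3) R
      have x1 := hv 0 1 2 (by decide) (by decide) (by decide)
      have x2 := hv 0 2 3 (by decide) (by decide) (by decide)
      have x3 := hv 0 1 3 (by decide) (by decide) (by decide)
      have y1 : d3 R (v 2) (v 0) = 0 := by rw [d3_swap, h, neg_zero]
      rw [h01, y1] at c1
      rw [h, h23] at c2
      simp only [zero_smul, add_zero, zero_add] at c1 c2
      have c3 : d3 (d3 (v 0) (v 2) (v 3) • R) (v 0) (v 1) =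
        d3 (d3 R (v 3) (v 0) • v 2) (v 0) (v 1) := by rw [c2]
      rw [d3_smul, d3_smul, h01, mul_zero] at c3
      have x4 := hv 2 0 1 (by decide) (by decide) (by decide)
      have : d3 R (v 3) (v 0) = 0 := by
        rcases mul_eq_zero.1 c3.symm with h | h
        · exact h
        · exact absurd h x4
      rw [this, zero_smul] at c2
      rcases smul_eq_zero.1 c2 with h | h
      · exact x2 h
      · exact hR h
    let g : Fin 3 → Fin 3 → F := ![R, v 0, v 2]
    have hg : d3 (g 0) (g 1) (g 2) ≠ 0 := hd
    choose w hw using fun i => comb_surj hg (v i)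
    have hw0 : w 0 = ![0, 1, 0] := comb_inj hg (by rw [hw, e1]; rfl)
    have hw2 : w 2 = ![0, 0, 1] := comb_inj hg (by rw [hw, e2]; rfl)
    have hvw : (fun i => comb g (w i)) = v := funext hw
    refine ⟨⟨⟨g, (li_iff_d3 _).2 hg⟩, ⟨w, ?_⟩⟩, ?_⟩
    · rw [← hmem g hg w hw0 hw2, hvw]
      exact hp
    · apply Subtype.ext
      simp only [hvw]
      rfl

/-- Parameters. -/
def Par (p : F × F × F × F) : Prop :=
  p.1 ≠ 0 ∧ p.2.1 ≠ 0 ∧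
    (p.2.2.1 ∉ ({0, p.1, p.2.1, p.1 + p.2.1} : Finset F) ∧
     p.2.2.2 ∉ ({0, p.1, p.2.1, p.1 + p.2.1} : Finset F) ∧ p.2.2.1 ≠ p.2.2.2)

/-- Configuration from parameters. -/
def conf (a c e y z b d x x' : F) : Fin 6 → Fin 3 → F :=
  ![![0, 1, 0], ![a * b, a * y, 0], ![0, 0, 1], ![c * d, 0, c * z], ![x, y, z],
    ![e * x', e * y, e * z]]

lemma forall_fin6_sorted (P : Fin 6 → Fin 6 → Fin 6 → Prop) :
    (∀ i j k, i < j → j < k → P i j k) ↔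
    P 0 1 2 ∧ P 0 1 3 ∧ P 0 1 4 ∧ P 0 1 5 ∧ P 0 2 3 ∧ P 0 2 4 ∧ P 0 2 5 ∧ P 0 3 4 ∧ P 0 3 5 ∧
    P 0 4 5 ∧ P 1 2 3 ∧ P 1 2 4 ∧ P 1 2 5 ∧ P 1 3 4 ∧ P 1 3 5 ∧ P 1 4 5 ∧ P 2 3 4 ∧ P 2 3 5 ∧
    P 2 4 5 ∧ P 3 4 5 := by
  constructor
  · intro h
    refine ⟨?_, ?_, ?_, ?_, ?_, ?_, ?_, ?_, ?_, ?_, ?_, ?_, ?_, ?_, ?_, ?_, ?_, ?_, ?_, ?_⟩ <;>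
    exact h _ _ _ (by decide) (by decide)
  · rintro ⟨_, _, _, _, _, _, _, _, _, _, _, _, _, _, _, _, _, _, _, _⟩ i j k hij hjk
    fin_cases i <;> fin_cases j <;> first | (exfalso; revert hij; decide) |
      (fin_cases k <;> first | assumption | (exfalso; revert hjk; decide))

lemma arc3_iff_sorted {n : ℕ} {v : Fin n → Fin 3 → F} : Arc3 v ↔
    (∀ i j k, i < j → j < k → d3 (v i) (v j) (v k) ≠ 0) :=
  ⟨fun h i j k hij hjk => h _ _ _ hij.ne (hij.trans hjk).ne hjk.ne, arc3_of_sorted⟩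

lemma conf_arc {a c e y z : F} (ha : a ≠ 0) (hc : c ≠ 0) (he : e ≠ 0) (hy : y ≠ 0) (hz : z ≠ 0)
    (b d x x' : F) : Arc3 (conf a c e y z b d x x') ↔ Par (b, d, x, x') := by
  rw [arc3_iff_sorted, forall_fin6_sorted]
  have r1 : d3 ![0, 1, 0] ![a * b, a * y, 0] ![0, 0, 1] = -(a * b) := by simp [d3]
  have r2 : d3 ![0, 1, 0] ![a * b, a * y, 0] ![c * d, 0, c * z] = -(a * b * c * z) := by
    simp [d3]; ring
  have r3 : d3 ![0, 1, 0] ![a * b, a * y, 0] ![x, y, z] = -(a * b * z) := by simp [d3]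
  have r4 : d3 ![0, 1, 0] ![a * b, a * y, 0] ![e * x', e * y, e * z] = -(a * b * e * z) := by
    simp [d3]; ring
  have r5 : d3 ![0, 1, 0] ![0, 0, 1] ![c * d, 0, c * z] = c * d := by simp [d3]
  have r6 : d3 ![0, 1, 0] ![0, 0, 1] ![x, y, z] = x := by simp [d3]
  have r7 : d3 ![0, 1, 0] ![0, 0, 1] ![e * x', e * y, e * z] = e * x' := by simp [d3]
  have r8 : d3 ![0, 1, 0] ![c * d, 0, c * z] ![x, y, z] = c * z * (x - d) := by simp [d3]; ring
  have r9 : d3 ![0, 1, 0] ![c * d, 0, c * z] ![e * x', e * y, e * z] = e * c * z * (x' - d) := by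
    simp [d3]; ring
  have r10 : d3 ![0, 1, 0] ![x, y, z] ![e * x', e * y, e * z] = e * z * (x' - x) := by
    simp [d3]; ring
  have r11 : d3 ![a * b, a * y, 0] ![0, 0, 1] ![c * d, 0, c * z] = a * y * c * d := by
    simp [d3]; ring
  have r12 : d3 ![a * b, a * y, 0] ![0, 0, 1] ![x, y, z] = a * y * (x - b) := by
    simp [d3]; ring
  have r13 : d3 ![a * b, a * y, 0] ![0, 0, 1] ![e * x', e * y, e * z] = a * e * y * (x' - b) := by
    simp [d3]; ring
  have r14 : d3 ![a * b, a * y, 0] ![c * d, 0, c * z] ![x, y, z] =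
      a * c * y * z * (x - (b + d)) := by
    simp [d3]; ring
  have r15 : d3 ![a * b, a * y, 0] ![c * d, 0, c * z] ![e * x', e * y, e * z] =
      a * c * e * y * z * (x' - (b + d)) := by
    simp [d3]; ring
  have r16 : d3 ![a * b, a * y, 0] ![x, y, z] ![e * x', e * y, e * z] =
      a * e * y * z * (x' - x) := by
    simp [d3]; ring
  have r17 : d3 ![0, 0, 1] ![c * d, 0, c * z] ![x, y, z] = c * d * y := by
    simp [d3]
  have r18 : d3 ![0, 0, 1] ![c * d, 0, c * z] ![e * x', e * y, e * z] = c * d * e * y := by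
    simp [d3]; ring
  have r19 : d3 ![0, 0, 1] ![x, y, z] ![e * x', e * y, e * z] = e * y * (x - x') := by
    simp [d3]; ring
  have r20 : d3 ![c * d, 0, c * z] ![x, y, z] ![e * x', e * y, e * z] = c * e * y * z * (x - x') := by
    simp [d3]; ring
  have s0 : conf a c e y z b d x x' 0 = ![0, 1, 0] := rfl
  have s1 : conf a c e y z b d x x' 1 = ![a * b, a * y, 0] := rfl
  have s2 : conf a c e y z b d x x' 2 = ![0, 0, 1] := rfl
  have s3 : conf a c e y z b d x x' 3 = ![c * d, 0, c * z] := rfl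
  have s4 : conf a c e y z b d x x' 4 = ![x, y, z] := rfl
  have s5 : conf a c e y z b d x x' 5 = ![e * x', e * y, e * z] := rfl
  rw [s0, s1, s2, s3, s4, s5, r1, r2, r3, r4, r5, r6, r7, r8, r9, r10, r11, r12, r13, r14, r15,
    r16, r17, r18, r19, r20]
  simp only [Par, mem_insert, mem_singleton, ne_eq, mul_eq_zero, neg_eq_zero, ha, hc, he, hy, hz,
    false_or, or_false, sub_eq_zero, not_or, eq_comm (a := x') (b := x)]
  tauto

lemma card_NormC : Nat.card {w : Fin 6 → Fin 3 → F // NormC w} =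
    (Fintype.card F - 1) ^ 5 * Nat.card {p : F × F × F × F // Par p} := by
  have h1 : (Fintype.card F - 1) ^ 5 = Nat.card (Fˣ × Fˣ × Fˣ × Fˣ × Fˣ) := by
    simp only [Nat.card_prod]
    rw [Nat.card_eq_fintype_card, Fintype.card_units]
    ring
  rw [h1, ← Nat.card_prod]
  symm
  refine Nat.card_eq_of_bijective (fun P => ⟨conf (P.1.1 : F) (P.1.2.1 : F) (P.1.2.2.1 : F)
    (P.1.2.2.2.1 : F) (P.1.2.2.2.2 : F) P.2.1.1 P.2.1.2.1 P.2.1.2.2.1 P.2.1.2.2.2, ?_⟩) ⟨?_, ?_⟩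
  · refine ⟨(conf_arc (Units.ne_zero _) (Units.ne_zero _) (Units.ne_zero _) (Units.ne_zero _)
      (Units.ne_zero _) _ _ _ _).2 P.2.2, rfl, rfl, rfl, rfl, ?_⟩
    simp [conf]
    ring
  · rintro ⟨⟨a, c, e, y, z⟩, ⟨⟨b, d, x, x'⟩, hp⟩⟩ ⟨⟨a', c', e', y', z'⟩, ⟨⟨b', d', u, u'⟩, hp'⟩⟩ h
    have h := congrArg Subtype.val h
    have k40 : x = u := congrFun (congrFun h 4) 0
    have k41 : (y : F) = y' := congrFun (congrFun h 4) 1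
    have k42 : (z : F) = z' := congrFun (congrFun h 4) 2
    have k10 : (a : F) * b = a' * b' := congrFun (congrFun h 1) 0
    have k11 : (a : F) * y = a' * y' := congrFun (congrFun h 1) 1
    have k30 : (c : F) * d = c' * d' := congrFun (congrFun h 3) 0
    have k32 : (c : F) * z = c' * z' := congrFun (congrFun h 3) 2
    have k50 : (e : F) * x' = e' * u' := congrFun (congrFun h 5) 0
    have k51 : (e : F) * y = e' * y' := congrFun (congrFun h 5) 1
    have hy := Units.ext k41
    have hz := Units.ext k42
    subst k40 hy hz
    have ha := Units.ext (mul_right_cancel₀ y.ne_zero k11)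
    have hc := Units.ext (mul_right_cancel₀ z.ne_zero k32)
    have he := Units.ext (mul_right_cancel₀ y.ne_zero k51)
    subst ha hc he
    have hb := mul_left_cancel₀ a.ne_zero k10
    have hd := mul_left_cancel₀ c.ne_zero k30
    have hx := mul_left_cancel₀ e.ne_zero k50
    subst hb hd hx
    rfl
  · rintro ⟨w, hw⟩
    obtain ⟨harc, w0, w2, w12, w31, w45⟩ := hw
    have hw11 : w 1 1 ≠ 0 := by
      intro h
      apply harc 1 2 3 (by decide) (by decide) (by decide)
      simp [d3, w2, h, w12, w31]
    have hw32 : w 3 2 ≠ 0 := by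
      intro h
      apply harc 0 1 3 (by decide) (by decide) (by decide)
      simp [d3, w0, h, w12, w31]
    have hw41 : w 4 1 ≠ 0 := by
      intro h
      apply harc 2 3 4 (by decide) (by decide) (by decide)
      simp [d3, w2, h, w12, w31]
    have hw42 : w 4 2 ≠ 0 := by
      intro h
      apply harc 0 1 4 (by decide) (by decide) (by decide)
      simp [d3, w0, h, w12, w31]
    have hw51 : w 5 1 ≠ 0 := by
      intro h
      apply harc 2 3 5 (by decide) (by decide) (by decide)
      simp [d3, w2, h, w12, w31]
    have ha : w 1 1 / w 4 1 ≠ 0 := div_ne_zero hw11 hw41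
    have hc : w 3 2 / w 4 2 ≠ 0 := div_ne_zero hw32 hw42
    have he : w 5 1 / w 4 1 ≠ 0 := div_ne_zero hw51 hw41
    have hconf : conf (w 1 1 / w 4 1) (w 3 2 / w 4 2) (w 5 1 / w 4 1) (w 4 1) (w 4 2)
        (w 1 0 / (w 1 1 / w 4 1)) (w 3 0 / (w 3 2 / w 4 2)) (w 4 0)
        (w 5 0 / (w 5 1 / w 4 1)) = w := by
      have t0 : (![0, 1, 0] : Fin 3 → F) = w 0 := w0.symm
      have t2 : (![0, 0, 1] : Fin 3 → F) = w 2 := w2.symm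
      funext i
      fin_cases i
      · exact t0
      · funext j
        fin_cases j
        · exact mul_div_cancel₀ _ ha
        · exact div_mul_cancel₀ _ hw41
        · exact w12.symm
      · exact t2
      · funext j
        fin_cases j
        · exact mul_div_cancel₀ _ hc
        · exact w31.symm
        · exact div_mul_cancel₀ _ hw42
      · funext j
        fin_cases j <;> rfl
      · funext j
        fin_cases j
        · exact mul_div_cancel₀ _ he
        · exact div_mul_cancel₀ _ hw41
        · change w 5 1 / w 4 1 * w 4 2 = w 5 2
          field_simp
          linear_combination -w45
    have hpar := (conf_arc ha hc he hw41 hw42 _ _ _ _).1 (hconf.symm ▸ harc)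
    exact ⟨⟨⟨Units.mk0 _ ha, Units.mk0 _ hc, Units.mk0 _ he, Units.mk0 _ hw41, Units.mk0 _ hw42⟩,
      ⟨_, hpar⟩⟩, Subtype.ext hconf⟩

/-- The forbidden values. -/
noncomputable def SS (b d : F) : Finset F := {0, b, d, b + d}

lemma card_Par : (Nat.card {p : F × F × F × F // Par p} : ℤ) =
    ∑ b ∈ univ.erase (0 : F), ∑ d ∈ univ.erase (0 : F),
      ((Fintype.card F : ℤ) - #(SS b d)) * ((Fintype.card F : ℤ) - #(SS b d) - 1) := by
  have h1 : Nat.card {p : F × F × F × F // Par p} =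
      ∑ b ∈ univ.erase (0 : F), ∑ d ∈ univ.erase (0 : F), #(SS b d)ᶜ.offDiag := by
    rw [← Finset.sum_product', ← card_sigma, Nat.card_eq_fintype_card, Fintype.card_subtype]
    refine card_nbij' (fun p => ⟨(p.1, p.2.1), p.2.2⟩) (fun s => (s.1.1, s.1.2, s.2)) ?_ ?_ ?_ ?_
    · rintro ⟨b, d, x, x'⟩ h
      simp [Par, SS, and_assoc] at h ⊢
      tauto
    · rintro ⟨⟨b, d⟩, x, x'⟩ h
      simp [Par, SS, and_assoc] at h ⊢
      tauto
    · intro _ _; rfl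
    · intro _ _; rfl
  rw [h1]
  push_cast
  refine sum_congr rfl fun b _ => sum_congr rfl fun d _ => ?_
  rw [offDiag_card, card_compl, Nat.cast_sub (Nat.le_mul_self _), Nat.cast_mul,
    Nat.cast_sub (card_le_univ _)]
  ring

lemma card_Par_odd (h2 : (2 : F) ≠ 0) : (Nat.card {p : F × F × F × F // Par p} : ℤ) =
    ((Fintype.card F : ℤ) - 1) * (((Fintype.card F : ℤ) - 3) ^ 2 * ((Fintype.card F : ℤ) - 4)) := by
  rw [card_Par]
  set q : ℤ := (Fintype.card F : ℤ) with hq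
  have hne : ∀ b : F, b ≠ 0 → b ≠ -b := by
    intro b hb h
    have : 2 * b = 0 := by linear_combination h
    rcases mul_eq_zero.1 this with h | h
    · exact h2 h
    · exact hb h
  have hin : ∀ b ∈ univ.erase (0 : F), ∀ d ∈ univ.erase (0 : F),
      (q - #(SS b d)) * (q - #(SS b d) - 1) =
      (q - 4) * (q - 5) + (if d = b then 2 * (q - 4) else 0) +
        (if d = -b then 2 * (q - 4) else 0) := by
    intro b hb d hd
    have hb : b ≠ 0 := by simpa using hb
    have hd : d ≠ 0 := by simpa using hd
    have hbn := hne b hb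
    by_cases hdb : d = b
    · subst hdb
      have hdd : d ≠ d + d := fun h => hb (by linear_combination -h)
      have h0 : 0 ≠ d + d := fun h => hbn (by linear_combination -h)
      have : #(SS d d) = 3 := by
        have : SS d d = {0, d, d + d} := by simp [SS]
        rw [this, card_eq_three]
        exact ⟨_, _, _, hb.symm, h0, hdd, rfl⟩
      rw [this, if_pos rfl, if_neg hbn]
      push_cast
      ring
    · by_cases hdn : d = -b
      · subst hdn
        have : #(SS b (-b)) = 3 := by
          have : SS b (-b) = {0, b, -b} := by
            ext x
            simp [SS]
            tauto
          rw [this, card_eq_three]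
          exact ⟨_, _, _, hb.symm, hd.symm, hbn, rfl⟩
        rw [this, if_pos rfl, if_neg hdb]
        push_cast
        ring
      · have : #(SS b d) = 4 := by
          have h0 : b + d ≠ 0 := fun h => hdn (by linear_combination h)
          unfold SS
          rw [card_insert_of_notMem, card_insert_of_notMem, card_insert_of_notMem, card_singleton]
          · simp [hb]
          · simp [Ne.symm hdb, hd]
          · simp [hb.symm, hd.symm, h0.symm]
        rw [this, if_neg hdb, if_neg hdn]
        push_cast
        ring
  have hcard : ((#(univ.erase (0 : F)) : ℕ) : ℤ) = q - 1 := by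
    rw [card_erase_of_mem (mem_univ _), card_univ, Nat.cast_sub Fintype.card_pos]
    simp [hq]
  have hin2 : ∀ b ∈ univ.erase (0 : F), ∑ d ∈ univ.erase (0 : F),
      (q - #(SS b d)) * (q - #(SS b d) - 1) = (q - 1) * ((q - 4) * (q - 5)) + 4 * (q - 4) := by
    intro b hb
    have hb' : b ≠ 0 := by simpa using hb
    rw [sum_congr rfl (hin b hb), sum_add_distrib, sum_add_distrib, sum_ite_eq', sum_ite_eq',
      if_pos hb, if_pos (by simpa using hb'), sum_const, nsmul_eq_mul, hcard]
    ring
  rw [sum_congr rfl hin2, sum_const, nsmul_eq_mul, hcard]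
  ring

lemma card_Par_even (h2 : (2 : F) = 0) : (Nat.card {p : F × F × F × F // Par p} : ℤ) =
    ((Fintype.card F : ℤ) - 1) * (((Fintype.card F : ℤ) - 2) *
      ((Fintype.card F : ℤ) ^ 2 - 8 * (Fintype.card F : ℤ) + 17)) := by
  rw [card_Par]
  set q : ℤ := (Fintype.card F : ℤ) with hq
  have hdouble : ∀ b : F, b + b = 0 := fun b => by linear_combination b * h2
  have hin : ∀ b ∈ univ.erase (0 : F), ∀ d ∈ univ.erase (0 : F),
      (q - #(SS b d)) * (q - #(SS b d) - 1) =
      (q - 4) * (q - 5) + (if d = b then 4 * q - 14 else 0) := by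
    intro b hb d hd
    have hb : b ≠ 0 := by simpa using hb
    have hd : d ≠ 0 := by simpa using hd
    by_cases hdb : d = b
    · subst hdb
      have : #(SS d d) = 2 := by
        have : SS d d = {0, d} := by
          ext x
          simp [SS, hdouble]
          tauto
        rw [this, card_pair hb.symm]
      rw [this, if_pos rfl]
      push_cast
      ring
    · have : #(SS b d) = 4 := by
        have h0 : b + d ≠ 0 := fun h => hdb (by linear_combination h - hdouble b)
        unfold SS
        rw [card_insert_of_notMem, card_insert_of_notMem, card_insert_of_notMem, card_singleton]
        · simp [hb]
        · simp [Ne.symm hdb, hd]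
        · simp [hb.symm, hd.symm, h0.symm]
      rw [this, if_neg hdb]
      push_cast
      ring
  have hcard : ((#(univ.erase (0 : F)) : ℕ) : ℤ) = q - 1 := by
    rw [card_erase_of_mem (mem_univ _), card_univ, Nat.cast_sub Fintype.card_pos]
    simp [hq]
  have hin2 : ∀ b ∈ univ.erase (0 : F), ∑ d ∈ univ.erase (0 : F),
      (q - #(SS b d)) * (q - #(SS b d) - 1) = (q - 1) * ((q - 4) * (q - 5)) + (4 * q - 14) := by
    intro b hb
    rw [sum_congr rfl (hin b hb), sum_add_distrib, sum_ite_eq',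
      if_pos hb, sum_const, nsmul_eq_mul, hcard]
  rw [sum_congr rfl hin2, sum_const, nsmul_eq_mul, hcard]
  ring

lemma card_LI3 : (Nat.card {G : Fin 3 → Fin 3 → F // LinearIndependent F G} : ℤ) =
    ((Fintype.card F : ℤ) ^ 3 - 1) * ((Fintype.card F : ℤ) ^ 3 - Fintype.card F) *
    ((Fintype.card F : ℤ) ^ 3 - (Fintype.card F : ℤ) ^ 2) := by
  have hq1 : 1 ≤ Fintype.card F := Fintype.card_pos
  have hp : ∀ i, i ≤ 3 → Fintype.card F ^ i ≤ Fintype.card F ^ 3 :=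
    fun i hi => Nat.pow_le_pow_right hq1 hi
  rw [card_linearIndependent (K := F) (V := Fin 3 → F) (k := 3) (by simp), Fin.prod_univ_three]
  simp only [Module.finrank_fin_fun, Fin.val_zero, Fin.val_one, Fin.val_two]
  push_cast [hp 0 (by norm_num), hp 1 (by norm_num), hp 2 (by norm_num), Nat.cast_sub]
  ring

lemma card_LI4 : (Nat.card {G : Fin 4 → Fin 4 → F // LinearIndependent F G} : ℤ) =
    ((Fintype.card F : ℤ) ^ 4 - 1) * ((Fintype.card F : ℤ) ^ 4 - Fintype.card F) *
    ((Fintype.card F : ℤ) ^ 4 - (Fintype.card F : ℤ) ^ 2) *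
    ((Fintype.card F : ℤ) ^ 4 - (Fintype.card F : ℤ) ^ 3) := by
  have hq1 : 1 ≤ Fintype.card F := Fintype.card_pos
  have hp : ∀ i, i ≤ 4 → Fintype.card F ^ i ≤ Fintype.card F ^ 4 :=
    fun i hi => Nat.pow_le_pow_right hq1 hi
  rw [card_linearIndependent (K := F) (V := Fin 4 → F) (k := 4) (by simp), Fin.prod_univ_four]
  simp only [Module.finrank_fin_fun, Fin.val_zero, Fin.val_one, Fin.val_two,
    show ((3 : Fin 4) : ℕ) = 3 from rfl]
  push_cast [hp 0 (by norm_num), hp 1 (by norm_num), hp 2 (by norm_num), hp 3 (by norm_num),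
    Nat.cast_sub]
  ring

lemma card_ArcLI : Nat.card {V : Fin 7 → Fin 3 → F // ArcLI V} = #(AA F 7) := by
  rw [Nat.card_eq_fintype_card, Fintype.card_subtype]
  congr 1
  ext G
  rw [mem_AA, mem_filter, arcLI_iff_arc3]
  simp

lemma arcs_formula (T : ℤ) (hT : (Nat.card {p : F × F × F × F // Par p} : ℤ) =
    ((Fintype.card F : ℤ) - 1) * T) :
    (Nat.card {σ : Fin 7 → Projectivization F (Fin 4 → F) // IsArc4 F σ} : ℤ) *
      ((Fintype.card F : ℤ) - 1) = (Nat.card {G : Fin 4 → Fin 4 → F // LinearIndependent F G} : ℤ) *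
      (((Fintype.card F : ℤ) ^ 2 - 5 * Fintype.card F + 6) *
      ((Fintype.card F : ℤ) ^ 2 - 9 * Fintype.card F + 21) *
      ((Fintype.card F : ℤ) ^ 2 - 14 * Fintype.card F + 55) - 15 * T) := by
  have hq1 : 1 < Fintype.card F := Fintype.one_lt_card
  have hd := congrArg (Nat.cast : ℕ → ℤ) (duality (F := F))
  have hc := congrArg (Nat.cast : ℕ → ℤ) (card_TT_eq (F := F))
  have hn := congrArg (Nat.cast : ℕ → ℤ) (card_NormC (F := F))
  rw [card_ArcLI] at hd
  push_cast [Nat.cast_sub hq1.le] at hd hc hn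
  rw [card_AA7, card_AA6, card_AA5, card_AA4, card_AA3, hc, hn, hT] at hd
  have hL : (Nat.card {G : Fin 3 → Fin 3 → F // LinearIndependent F G} : ℤ) ≠ 0 := by
    have hq : (1 : ℤ) < Fintype.card F := by exact_mod_cast hq1
    rw [card_LI3]
    set q : ℤ := (Fintype.card F : ℤ)
    have e : (q ^ 3 - 1) * (q ^ 3 - q) * (q ^ 3 - q ^ 2) =
      (q - 1) ^ 3 * (q ^ 2 + q + 1) * (q + 1) * q ^ 3 := by ring
    rw [e]
    have : 0 < q - 1 := by linarith
    positivity
  have hq : ((Fintype.card F : ℤ) - 1) ≠ 0 := by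
    have : (1 : ℤ) < Fintype.card F := by exact_mod_cast hq1
    linarith
  refine mul_right_cancel₀ (mul_ne_zero hL (pow_ne_zero 6 hq)) ?_
  linear_combination hd

end
end Seven
/-- For every prime power `q`,
`C_{7,4}(q) = (q^2+q+1)(q^2+1)(q+1)^2 (q-1)^3 q^6
  (q^6 - 28q^5 + 323q^4 - 1952q^3 + 6462q^2 - 11004q + 7470 - 30 a(q))`,
where `a(q) = 1` if `q` is even and `0` if `q` is odd. -/
theorem C74_formula (F : Type) [Field F] [Fintype F] (q : ℕ) (hq : q = Fintype.card F) :
    (Nat.card {σ : Fin 7 → ℙ F (Fin 4 → F) // IsArc4 F σ} : ℤ) =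
      ((q : ℤ)^2 + q + 1) * ((q : ℤ)^2 + 1) * ((q : ℤ) + 1)^2 * ((q : ℤ) - 1)^3 * (q : ℤ)^6 *
        ((q : ℤ)^6 - 28 * (q : ℤ)^5 + 323 * (q : ℤ)^4 - 1952 * (q : ℤ)^3 + 6462 * (q : ℤ)^2
          - 11004 * (q : ℤ) + 7470 - 30 * (if Even q then 1 else 0)) := by

  subst hq
  have hq1 : (1 : ℤ) < Fintype.card F := by exact_mod_cast Fintype.one_lt_card
  have hne : ((Fintype.card F : ℤ) - 1) ≠ 0 := by linarith
  refine mul_right_cancel₀ hne ?_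
  have h2 : Even (Fintype.card F) ↔ (2 : F) = 0 := by
    rw [Nat.even_iff, ← FiniteField.even_card_iff_char_two]
    constructor
    · intro h
      have := ringChar.Nat.cast_ringChar (R := F)
      rw [h] at this
      exact_mod_cast this
    · intro h
      by_contra hc
      exact Ring.two_ne_zero hc h
  by_cases h : Even (Fintype.card F)
  · rw [if_pos h, Seven.arcs_formula _ (Seven.card_Par_even (h2.1 h)), Seven.card_LI4]
    ring
  · rw [if_neg h, Seven.arcs_formula _ (Seven.card_Par_odd (fun h' => h (h2.2 h'))),
      Seven.card_LI4]
    ring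
end

section
/- For every prime power q, the number of injective maps σ from {0,1,2,3,4,5} to P^3(F_q) such that σ(0), σ(1), σ(2) are collinear, σ(3), σ(4), σ(5) are collinear, a triple of image points is collinear only when its index set is contained in {0,1,2} or {3,4,5}, and four image points σ(a), σ(b), σ(c), σ(d) are coplanar if and only if {a,b,c,d} is one of {0,1,2,3}, {0,1,2,4}, {0,1,2,5}, {0,3,4,5}, {1,3,4,5}, {2,3,4,5}, equals A_6(4,q) = (q^2 + q + 1)(q^2 + 1)(q + 1)^2 (q − 1)^2 · q^6. -/
open scoped LinearAlgebra.Projectivization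

/-- Three points of `ℙ³(F_q)` are collinear if vector representatives of them span a
subspace of `F_q^4` of dimension at most 2. -/
def Collinear3 (F : Type) [Field F] (x y z : ℙ F (Fin 4 → F)) : Prop :=
  Module.finrank F ↥(x.submodule ⊔ y.submodule ⊔ z.submodule) ≤ 2

namespace A6

/-- Coefficients of the six points in terms of a basis. -/
def D : Matrix (Fin 6) (Fin 4) ℤ :=
  ![![1,0,0,0], ![0,1,0,0], ![1,1,0,0], ![0,0,1,0], ![0,0,0,1], ![0,0,1,1]]

/-- The list of planes. -/
def planes : Finset (Finset (Fin 6)) :=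
  {{0, 1, 2, 3}, {0, 1, 2, 4}, {0, 1, 2, 5}, {0, 3, 4, 5}, {1, 3, 4, 5}, {2, 3, 4, 5}}

/-- Explicit 3 by 3 determinant. -/
def e3 (u v w : Fin 4 → ℤ) (i j k : Fin 4) : ℤ :=
  u i * (v j * w k - v k * w j) - u j * (v i * w k - v k * w i) + u k * (v i * w j - v j * w i)

/-- Explicit 4 by 4 determinant. -/
def e4 (t u v w : Fin 4 → ℤ) : ℤ :=
  t 0 * e3 u v w 1 2 3 - t 1 * e3 u v w 0 2 3 + t 2 * e3 u v w 0 1 3 - t 3 * e3 u v w 0 1 2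

lemma det_eq (t u v w : Fin 4 → ℤ) : Matrix.det (Matrix.of ![t, u, v, w]) = e4 t u v w := by
  rw [Matrix.det_succ_row_zero]
  simp [Fin.sum_univ_succ, Matrix.det_fin_three, Fin.succAbove, e4, e3, Matrix.submatrix]
  try ring

lemma quad (a b c d : Fin 6) (h1 : a ≠ b) (h2 : a ≠ c) (h3 : a ≠ d) (h4 : b ≠ c) (h5 : b ≠ d)
    (h6 : c ≠ d) : (({a, b, c, d} : Finset (Fin 6)) ∈ planes ∧ e4 (D a) (D b) (D c) (D d) = 0) ∨
      (({a, b, c, d} : Finset (Fin 6)) ∉ planes ∧ 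
        (e4 (D a) (D b) (D c) (D d) = 1 ∨ e4 (D a) (D b) (D c) (D d) = -1)) := by
  revert a b c d
  decide +kernel

lemma trip (a b c : Fin 6) (h1 : a ≠ b) (h2 : a ≠ c) (h4 : b ≠ c) :
    (({a, b, c} : Finset (Fin 6)) ⊆ {0, 1, 2} ∨ ({a, b, c} : Finset (Fin 6)) ⊆ {3, 4, 5}) ∨
     ∃ d, a ≠ d ∧ b ≠ d ∧ c ≠ d ∧ ({a, b, c, d} : Finset (Fin 6)) ∉ planes := by
  revert a b c
  decide +kernel

lemma pair (a b : Fin 6) (h1 : a ≠ b) :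
     ∃ c d, a ≠ c ∧ a ≠ d ∧ b ≠ c ∧ b ≠ d ∧ c ≠ d ∧ ({a, b, c, d} : Finset (Fin 6)) ∉ planes := by
  revert a b
  decide +kernel

variable {F : Type} [Field F]

/-- The six vectors built from a basis. -/
def W (b : Fin 4 → Fin 4 → F) : Fin 6 → Fin 4 → F :=
  ![b 0, b 1, b 0 + b 1, b 2, b 3, b 2 + b 3]

lemma W_eq (b : Fin 4 → Fin 4 → F) (i : Fin 6) (k : Fin 4) :
    W b i k = ∑ j, ((D i j : ℤ) : F) * b j k := by
  fin_cases i <;> simp [W, D, Fin.sum_univ_succ]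

lemma li_iff (M : Fin 4 → Fin 4 → F) : LinearIndependent F M ↔ (Matrix.of M).det ≠ 0 := by
  have := Matrix.linearIndependent_rows_iff_isUnit (A := Matrix.of M)
  rw [Matrix.isUnit_iff_isUnit_det, isUnit_iff_ne_zero] at this
  exact this

lemma li_W (v : Fin 4 → Fin 4 → F) (hv : LinearIndependent F v) (a b c d : Fin 6) :
    LinearIndependent F ![W v a, W v b, W v c, W v d] ↔
      ((e4 (D a) (D b) (D c) (D d) : ℤ) : F) ≠ 0 := by
  rw [li_iff] at hv ⊢
  have : Matrix.of ![W v a, W v b, W v c, W v d] =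
      (Matrix.of ![D a, D b, D c, D d]).map (Int.castRingHom F) * Matrix.of v := by
    ext i j
    fin_cases i <;> simp [Matrix.mul_apply, W_eq]
  rw [this, Matrix.det_mul, ← RingHom.mapMatrix_apply, ← RingHom.map_det, det_eq]
  simp [hv]

lemma cop_iff {x y z w : ℙ F (Fin 4 → F)} {a b c d : Fin 4 → F}
    (hx : x.submodule = Submodule.span F {a}) (hy : y.submodule = Submodule.span F {b})
    (hz : z.submodule = Submodule.span F {c}) (hw : w.submodule = Submodule.span F {d}) :
    Coplanar4 F x y z w ↔ ¬ LinearIndependent F ![a, b, c, d] := by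
  have h : x.submodule ⊔ y.submodule ⊔ z.submodule ⊔ w.submodule
      = Submodule.span F (Set.range ![a, b, c, d]) := by
    rw [hx, hy, hz, hw]
    simp [← Submodule.span_union, Matrix.range_cons, Set.union_assoc]
    try rfl
  rw [Coplanar4, h, linearIndependent_iff_card_eq_finrank_span, Set.finrank]
  have := finrank_range_le_card (R := F) ![a, b, c, d]
  rw [Set.finrank] at this
  simp only [Fintype.card_fin] at *
  omega

lemma col_iff {x y z : ℙ F (Fin 4 → F)} {a b c : Fin 4 → F}
    (hx : x.submodule = Submodule.span F {a}) (hy : y.submodule = Submodule.span F {b})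
    (hz : z.submodule = Submodule.span F {c}) :
    Collinear3 F x y z ↔ ¬ LinearIndependent F ![a, b, c] := by
  have h : x.submodule ⊔ y.submodule ⊔ z.submodule
      = Submodule.span F (Set.range ![a, b, c]) := by
    rw [hx, hy, hz]
    simp [← Submodule.span_union, Matrix.range_cons, Set.union_assoc]
    try rfl
  rw [Collinear3, h, linearIndependent_iff_card_eq_finrank_span, Set.finrank]
  have := finrank_range_le_card (R := F) ![a, b, c]
  rw [Set.finrank] at this
  simp only [Fintype.card_fin] at *
  omega

/-- strong realization -/
def P (σ : Fin 6 → ℙ F (Fin 4 → F)) : Prop :=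
        Function.Injective σ ∧
        Collinear3 F (σ 0) (σ 1) (σ 2) ∧
        Collinear3 F (σ 3) (σ 4) (σ 5) ∧
        (∀ a b c : Fin 6, a ≠ b → a ≠ c → b ≠ c →
          Collinear3 F (σ a) (σ b) (σ c) →
            ({a, b, c} : Finset (Fin 6)) ⊆ {0, 1, 2} ∨
              ({a, b, c} : Finset (Fin 6)) ⊆ {3, 4, 5}) ∧
        (∀ a b c d : Fin 6, a ≠ b → a ≠ c → a ≠ d → b ≠ c → b ≠ d → c ≠ d →
          (Coplanar4 F (σ a) (σ b) (σ c) (σ d) ↔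
            ({a, b, c, d} : Finset (Fin 6)) ∈ planes))

/-- `σ` is the configuration of the basis `v`. -/
def R (v : Fin 4 → Fin 4 → F) (σ : Fin 6 → ℙ F (Fin 4 → F)) : Prop :=
  ∀ i, (σ i).submodule = Submodule.span F {W v i}

lemma dep_sum (a b : Fin 4 → F) : ¬ LinearIndependent F ![a, b, a + b] := by
  intro h
  have := Fintype.linearIndependent_iff.1 h ![1, 1, -1] (by simp [Fin.sum_univ_succ]) 0
  simp at this

lemma P_of_R (v : Fin 4 → Fin 4 → F) (hv : LinearIndependent F v) (σ : Fin 6 → ℙ F (Fin 4 → F))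
    (h : R v σ) : P σ := by
  have key : ∀ a b c d : Fin 6, a ≠ b → a ≠ c → a ≠ d → b ≠ c → b ≠ d → c ≠ d →
      (LinearIndependent F ![W v a, W v b, W v c, W v d] ↔
            ({a, b, c, d} : Finset (Fin 6)) ∉ planes) := by
    intro a b c d h1 h2 h3 h4 h5 h6
    rw [li_W v hv]
    rcases quad a b c d h1 h2 h3 h4 h5 h6 with ⟨k, e⟩ | ⟨k, e | e⟩ <;> simp [k, e]
  refine ⟨?_, ?_, ?_, ?_, ?_⟩
  · intro a b hab
    by_contra hne
    obtain ⟨c, d, h2, h3, h4, h5, h6, hp⟩ := pair a b hne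
    have hl := (key a b c d hne h2 h3 h4 h5 h6).2 hp
    refine (cop_iff (h a) (h b) (h c) (h d)).1 ?_ hl
    rw [cop_iff (h a) ((congrArg _ hab.symm).trans (h a)) (h c) (h d)]
    intro hl
    have h01 : (0 : Fin 4) = 1 := hl.injective (by simp)
    exact absurd h01 (by decide)
  · rw [col_iff (h 0) (h 1) (h 2)]
    exact dep_sum _ _
  · rw [col_iff (h 3) (h 4) (h 5)]
    exact dep_sum _ _
  · intro a b c h1 h2 h4 hc
    rcases trip a b c h1 h2 h4 with k | ⟨d, h3, h5, h6, hp⟩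
    · exact k
    · exfalso
      have hl := (key a b c d h1 h2 h3 h4 h5 h6).2 hp
      refine (col_iff (h a) (h b) (h c)).1 hc ?_
      have := hl.comp (![0, 1, 2] : Fin 3 → Fin 4) (by decide)
      convert this using 1
      ext i
      fin_cases i <;> rfl
  · intro a b c d h1 h2 h3 h4 h5 h6
    rw [cop_iff (h a) (h b) (h c) (h d), key a b c d h1 h2 h3 h4 h5 h6, not_not]

lemma exists_R (v : Fin 4 → Fin 4 → F) (hv : LinearIndependent F v) : ∃ σ, R v σ := by
  have hne : ∀ i, W v i ≠ 0 := by
    intro i h0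
    obtain ⟨b, hb⟩ : ∃ b, i ≠ b := ⟨i + 1, by clear h0; revert i; decide⟩
    obtain ⟨c, d, h2, h3, h4, h5, h6, hp⟩ := pair i b hb
    have hl : LinearIndependent F ![W v i, W v b, W v c, W v d] := by
      rw [li_W v hv]
      rcases quad i b c d hb h2 h3 h4 h5 h6 with ⟨k, e⟩ | ⟨k, e | e⟩
      · exact absurd k hp
      · simp [e]
      · simp [e]
    exact hl.ne_zero 0 h0
  exact ⟨fun i => Projectivization.mk F (W v i) (hne i), fun i => Projectivization.submodule_mk _ _⟩

lemma line {x y z : ℙ F (Fin 4 → F)} (hxy : x ≠ y) (hxz : x ≠ z) (hyz : y ≠ z)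
    (hc : Collinear3 F x y z) : ∃ a b : Fin 4 → F, x.submodule = Submodule.span F {a} ∧
      y.submodule = Submodule.span F {b} ∧ z.submodule = Submodule.span F {a + b} := by
  have hx := x.submodule_eq
  have hy := y.submodule_eq
  have hz := z.submodule_eq
  rw [col_iff hx hy hz] at hc
  have ne : ∀ {x y : ℙ F (Fin 4 → F)} (r : F), x ≠ y → r • x.rep = y.rep → False := by
    intro x y r hne h
    apply hne
    have hr : r ≠ 0 := by
      rintro rfl
      exact y.rep_nonzero (by simpa using h.symm)
    apply Projectivization.submodule_injective
    rw [x.submodule_eq, y.submodule_eq, ← h, Submodule.span_singleton_smul_eq hr.isUnit]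
  obtain ⟨g, hg, i, hi⟩ := Fintype.not_linearIndependent_iff.1 hc
  simp only [Fin.sum_univ_three, Matrix.cons_val_zero, Matrix.cons_val_one, Matrix.cons_val] at hg
  have solve : ∀ {x y : ℙ F (Fin 4 → F)} (r s : F), x ≠ y → r • x.rep + s • y.rep = 0 →
      r = 0 ∧ s = 0 := by
    intro x y r s hne h
    by_cases hs : s = 0
    · subst hs
      simpa [x.rep_nonzero] using h
    · exfalso
      refine ne (-(s⁻¹ * r)) hne ?_
      have h2 : s • y.rep = -(r • x.rep) := by
        rw [eq_neg_iff_add_eq_zero, add_comm]; exact h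
      rw [neg_smul, mul_smul, ← smul_neg, ← h2, smul_smul, inv_mul_cancel₀ hs, one_smul]
  have g0 : g 0 ≠ 0 := by
    intro h0
    have := solve (g 1) (g 2) hyz (by simpa [h0] using hg)
    fin_cases i <;> simp_all
  have g1 : g 1 ≠ 0 := by
    intro h0
    have := solve (g 0) (g 2) hxz (by simpa [h0] using hg)
    exact g0 this.1
  have g2 : g 2 ≠ 0 := by
    intro h0
    have := solve (g 0) (g 1) hxy (by simpa [h0] using hg)
    exact g0 this.1
  refine ⟨g 0 • x.rep, g 1 • y.rep, ?_, ?_, ?_⟩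
  · rw [Submodule.span_singleton_smul_eq g0.isUnit, hx]
  · rw [Submodule.span_singleton_smul_eq g1.isUnit, hy]
  · rw [eq_neg_of_add_eq_zero_left hg, ← neg_smul,
      Submodule.span_singleton_smul_eq (neg_ne_zero.2 g2).isUnit, hz]

lemma exists_basis (σ : Fin 6 → ℙ F (Fin 4 → F)) (h : P σ) :
    ∃ v : Fin 4 → Fin 4 → F, LinearIndependent F v ∧ R v σ := by
  obtain ⟨hi, h0, h3, -, hc⟩ := h
  obtain ⟨a, b, ha, hb, hab⟩ := line (hi.ne (show (0 : Fin 6) ≠ 1 by decide))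
    (hi.ne (show (0 : Fin 6) ≠ 2 by decide)) (hi.ne (show (1 : Fin 6) ≠ 2 by decide)) h0
  obtain ⟨c, d, hc₁, hd, hcd⟩ := line (hi.ne (show (3 : Fin 6) ≠ 4 by decide))
    (hi.ne (show (3 : Fin 6) ≠ 5 by decide)) (hi.ne (show (4 : Fin 6) ≠ 5 by decide)) h3
  refine ⟨![a, b, c, d], ?_, ?_⟩
  · have := (not_congr (hc 0 1 3 4 (by decide) (by decide) (by decide) (by decide) (by decide)
      (by decide))).2 (by decide)
    rw [cop_iff ha hb hc₁ hd, not_not] at this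
    exact this
  · intro i
    fin_cases i
    · exact ha
    · exact hb
    · exact hab
    · exact hc₁
    · exact hd
    · exact hcd

/-- scaling -/
def sc (s t : Fˣ) (v : Fin 4 → Fin 4 → F) : Fin 4 → Fin 4 → F :=
  ![(s : F) • v 0, (s : F) • v 1, (t : F) • v 2, (t : F) • v 3]

lemma sc_li (s t : Fˣ) (v : Fin 4 → Fin 4 → F) (hv : LinearIndependent F v) :
    LinearIndependent F (sc s t v) := by
  have := hv.units_smul ![s, s, t, t]
  convert this using 1
  ext i
  fin_cases i <;> rfl

lemma sc_R (s t : Fˣ) (v : Fin 4 → Fin 4 → F) (σ : Fin 6 → ℙ F (Fin 4 → F)) (h : R v σ) :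
    R (sc s t v) σ := by
  intro i
  have hW : W (sc s t v) i = ((![s, s, s, t, t, t] i : Fˣ) : F) • W v i := by
    fin_cases i <;> simp [W, sc]
  rw [h i, hW, Submodule.span_singleton_smul_eq (Units.isUnit _)]

lemma scal {a b a₁ b₁ : Fin 4 → F} (hl : LinearIndependent F ![a, b])
    (ha : Submodule.span F {a₁} = Submodule.span F {a})
    (hb : Submodule.span F {b₁} = Submodule.span F {b})
    (hab : Submodule.span F {a₁ + b₁} = Submodule.span F {a + b}) :
    ∃ s : Fˣ, (s : F) • a = a₁ ∧ (s : F) • b = b₁ := by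
  obtain ⟨x, hx⟩ := Submodule.span_singleton_eq_span_singleton.1 ha.symm
  obtain ⟨y, hy⟩ := Submodule.span_singleton_eq_span_singleton.1 hb.symm
  obtain ⟨z, hz⟩ := Submodule.span_singleton_eq_span_singleton.1 hab.symm
  simp only [Units.smul_def] at hx hy hz
  rw [LinearIndependent.pair_iff] at hl
  have := hl (z - x) (z - y) (by
    rw [sub_smul, sub_smul, hx, hy]
    rw [smul_add] at hz
    rw [sub_add_sub_comm, hz, sub_self])
  have e : (x : F) = y := by linear_combination this.2 - this.1
  exact ⟨x, hx, by rw [e, hy]⟩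

lemma exists_sc (v w : Fin 4 → Fin 4 → F) (hv : LinearIndependent F v)
    (σ : Fin 6 → ℙ F (Fin 4 → F)) (h : R v σ) (hh : R w σ) : ∃ s t : Fˣ, sc s t v = w := by
  have e : ∀ i, Submodule.span F {W w i} = Submodule.span F {W v i} := fun i => (hh i).symm.trans (h i)
  have l : ∀ i j : Fin 4, i ≠ j → LinearIndependent F ![v i, v j] := by
    intro i j hij
    have := hv.comp (![i, j] : Fin 2 → Fin 4) (by
      intro a b; fin_cases a <;> fin_cases b <;> simp [hij, hij.symm])
    convert this using 1
    ext k
    fin_cases k <;> rfl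
  obtain ⟨s, s0, s1⟩ := scal (l 0 1 (by decide)) (e 0) (e 1) (e 2)
  obtain ⟨t, t0, t1⟩ := scal (l 2 3 (by decide)) (e 3) (e 4) (e 5)
  refine ⟨s, t, ?_⟩
  ext k
  fin_cases k <;> simp [sc, s0, s1, t0, t1] <;> rfl

/-- The parametrization. -/
noncomputable def g (x : {σ : Fin 6 → ℙ F (Fin 4 → F) // P σ} × Fˣ × Fˣ) :
    {v : Fin 4 → Fin 4 → F // LinearIndependent F v} :=
  ⟨sc x.2.1 x.2.2 (exists_basis x.1.1 x.1.2).choose,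
    sc_li _ _ _ (exists_basis x.1.1 x.1.2).choose_spec.1⟩

lemma g_R (x : {σ : Fin 6 → ℙ F (Fin 4 → F) // P σ} × Fˣ × Fˣ) : R (g x).1 x.1.1 :=
  sc_R _ _ _ _ (exists_basis x.1.1 x.1.2).choose_spec.2

lemma R_unique (v : Fin 4 → Fin 4 → F) (σ τ : Fin 6 → ℙ F (Fin 4 → F)) (h : R v σ) (hh : R v τ) :
    σ = τ := by
  ext1 i
  exact Projectivization.submodule_injective ((h i).trans (hh i).symm)

lemma g_bij : Function.Bijective (g (F := F)) := by
  constructor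
  · rintro ⟨σ, s, t⟩ ⟨τ, s₁, t₁⟩ h
    have hr := g_R (τ, s₁, t₁)
    rw [← h] at hr
    have e : σ = τ := Subtype.ext (R_unique _ _ _ (g_R (σ, s, t)) hr)
    subst e
    have hv := (exists_basis σ.1 σ.2).choose_spec.1
    have h1 := congrArg Subtype.val h
    have h0 := congrFun h1 0
    have h2 := congrFun h1 2
    simp only [g, sc] at h0 h2
    have a0 : s = s₁ := Units.ext (smul_left_injective F (hv.ne_zero 0) h0)
    have a2 : t = t₁ := Units.ext (smul_left_injective F (hv.ne_zero 2) h2)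
    rw [a0, a2]
  · rintro ⟨w, hw⟩
    obtain ⟨σ, hσ⟩ := exists_R w hw
    have hP := P_of_R w hw σ hσ
    obtain ⟨s, t, h⟩ := exists_sc _ w (exists_basis σ hP).choose_spec.1 σ
      (exists_basis σ hP).choose_spec.2 hσ
    exact ⟨⟨⟨σ, hP⟩, s, t⟩, Subtype.ext h⟩

lemma card_P [Fintype F] : Nat.card {σ : Fin 6 → ℙ F (Fin 4 → F) // P σ} *
    ((Fintype.card F - 1) * (Fintype.card F - 1)) =
    ∏ i : Fin 4, (Fintype.card F ^ 4 - Fintype.card F ^ (i : ℕ)) := by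
  have h1 := Nat.card_congr (Equiv.ofBijective _ (g_bij (F := F)))
  rw [Nat.card_prod, Nat.card_prod, card_linearIndependent (by simp)] at h1
  simpa [Nat.card_eq_fintype_card, Nat.card_units] using h1

end A6

/-- `A_6(4,q)`: the number of strong realizations in `ℙ³(F_q)` of the unique
hyperfiguration on 6 points (two skew 3-point lines `{0,1,2}`, `{3,4,5}` and six
4-point planes) equals `(q^2+q+1)(q^2+1)(q+1)^2(q-1)^2 q^6`. -/
theorem A6_formula (F : Type) [Field F] [Fintype F] (q : ℕ) (hq : q = Fintype.card F) :
    (Nat.card {σ : Fin 6 → ℙ F (Fin 4 → F) //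
        Function.Injective σ ∧
        Collinear3 F (σ 0) (σ 1) (σ 2) ∧
        Collinear3 F (σ 3) (σ 4) (σ 5) ∧
        (∀ a b c : Fin 6, a ≠ b → a ≠ c → b ≠ c →
          Collinear3 F (σ a) (σ b) (σ c) →
            ({a, b, c} : Finset (Fin 6)) ⊆ {0, 1, 2} ∨
              ({a, b, c} : Finset (Fin 6)) ⊆ {3, 4, 5}) ∧
        (∀ a b c d : Fin 6, a ≠ b → a ≠ c → a ≠ d → b ≠ c → b ≠ d → c ≠ d →
          (Coplanar4 F (σ a) (σ b) (σ c) (σ d) ↔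
            ({a, b, c, d} : Finset (Fin 6)) ∈
              ({{0, 1, 2, 3}, {0, 1, 2, 4}, {0, 1, 2, 5}, {0, 3, 4, 5}, {1, 3, 4, 5},
                {2, 3, 4, 5}} : Finset (Finset (Fin 6)))))} : ℤ) =
      ((q : ℤ)^2 + q + 1) * ((q : ℤ)^2 + 1) * ((q : ℤ) + 1)^2 * ((q : ℤ) - 1)^2 * (q : ℤ)^6 := by
  change ((Nat.card {σ : Fin 6 → ℙ F (Fin 4 → F) // A6.P σ} : ℕ) : ℤ) = _
  have h := A6.card_P (F := F)
  rw [← hq] at h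
  have hq2 : 2 ≤ q := by rw [hq]; exact Fintype.one_lt_card
  have hp : ∀ k, k ≤ 4 → q ^ k ≤ q ^ 4 := fun k hk => Nat.pow_le_pow_right (by omega) hk
  have hh := congrArg (Nat.cast : ℕ → ℤ) h
  simp only [Fin.prod_univ_four] at hh
  have c0 := hp 0 (by norm_num)
  have c1 := hp 1 (by norm_num)
  have c2 := hp 2 (by norm_num)
  have c3 := hp 3 (by norm_num)
  have cq : 1 ≤ q := by omega
  simp only [Fin.val_zero, Fin.val_one, Fin.val_two, show ((3 : Fin 4) : ℕ) = 3 from rfl] at hh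
  simp only [Nat.cast_mul, Nat.cast_sub c0, Nat.cast_sub c1, Nat.cast_sub c2, Nat.cast_sub c3,
    Nat.cast_sub cq, Nat.cast_pow, Nat.cast_one] at hh
  have hz : (q : ℤ) - 1 ≠ 0 := by
    have : (2 : ℤ) ≤ q := by exact_mod_cast hq2
    omega
  refine mul_right_cancel₀ (mul_ne_zero hz hz) (hh.trans ?_)
  ring
end
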